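/- arXiv:2210.09700 — 2 statements merged into one kernel-verified Lean document; each statement's English description precedes it below -/
import Mathlib

section
/- Let d be a positive integer. Suppose a : {1,...,p} → ℤ>0 and b : {1,...,q} → ℤ>0 are partitions of d (i.e. a₁ + ⋯ + a_p = d and b₁ + ⋯ + b_q = d), and m₁, m₂ are positive integers with m₁ + m₂ = p + q, m₁ + 1 ≤ d, and m₂ + 1 ≤ d. Then there exist permutations τ₁, τ₂, σ₁, σ₂ in the symmetric group S_d such that: (1) τ₁ τ₂ σ₁ σ₂ = id; (2) the cycle type of τ₁ (as a partition of d, counting each fixed point as a part equal to 1) is (a₁, …, a_p), the cycle type of τ₂ is (b₁, …, b_q), σ₁ is a single cycle of length m₁ + 1, and σ₂ is a single cycle of length m₂ + 1; (3) the subgroup of S_d generated by τ₁, τ₂, σ₁, σ₂ acts transitively on {1, 2, …, d}. -/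
/-- The cycle type of a permutation of `Fin n`, as a partition of `n`:
the lengths of the cycles in the disjoint cycle decomposition, counting
each fixed point as a part equal to `1`. -/
def fullCycleType {n : ℕ} (σ : Equiv.Perm (Fin n)) : Multiset ℕ :=
  σ.cycleType + Multiset.replicate (n - σ.support.card) 1

set_option linter.unusedSectionVars false
namespace L24
open Equiv Equiv.Perm

section basics
variable {X : Type} [Fintype X] [DecidableEq X]

/-- Orbit induction. -/
lemma sc_rec (σ : Perm X) (R : X → X → Prop) (hr : ∀ x, R x x)
    (ht : ∀ x y z, R x y → R y z → R x z) (hs : ∀ u, R u (σ u)) {y z : X}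
    (h : σ.SameCycle y z) : R y z := by
  obtain ⟨i, -, hi⟩ := h.exists_pow_eq'
  subst hi
  clear h
  induction i with
  | zero => exact hr _
  | succ i ih =>
    refine ht _ _ _ ih ?_
    rw [pow_succ']
    exact hs _

open Classical in
/-- The cycle of `x` as a finset. -/
noncomputable def cyc (σ : Perm X) (x : X) : Finset X :=
  Finset.univ.filter (fun y => σ.SameCycle x y)

lemma mem_cyc {σ : Perm X} {x y : X} : y ∈ cyc σ x ↔ σ.SameCycle x y := by
  simp [cyc]

lemma cyc_eq_iff {σ : Perm X} {x y : X} : cyc σ x = cyc σ y ↔ σ.SameCycle x y := by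
  constructor
  · intro h
    rw [← mem_cyc, h, mem_cyc]
  · intro h
    ext z
    rw [mem_cyc, mem_cyc]
    exact ⟨fun h' => h.symm.trans h', fun h' => h.trans h'⟩

/-- Type of `σ` on `D`. -/
noncomputable def ty (D : Finset X) (σ : Perm X) : Multiset ℕ :=
  (D.image (cyc σ)).val.map Finset.card

lemma cyc_fixed {σ : Perm X} {n : X} (hn : σ n = n) : cyc σ n = {n} := by
  ext z
  rw [mem_cyc, Finset.mem_singleton]
  constructor
  · intro h
    exact (h.eq_of_left hn).symm
  · rintro rfl; exact SameCycle.refl _ _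

/-- The cycles other than that of `x`. -/
noncomputable def rest (D : Finset X) (σ : Perm X) (x : X) : Finset (Finset X) :=
  (D.image (cyc σ)).erase (cyc σ x)

lemma ty_eq {D : Finset X} {σ : Perm X} {x : X} (hx : x ∈ D) :
    ty D σ = (cyc σ x).card ::ₘ (rest D σ x).val.map Finset.card := by
  have h : cyc σ x ∈ D.image (cyc σ) := Finset.mem_image_of_mem _ hx
  rw [ty, rest]
  conv_lhs => rw [← Finset.insert_erase h]
  rw [Finset.insert_val_of_notMem (by simp), Multiset.map_cons]

lemma ty_fixed {D : Finset X} {σ : Perm X} {n : X} (hn : n ∉ D) (hσ : σ n = n) :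
    ty (insert n D) σ = 1 ::ₘ ty D σ := by
  rw [ty, Finset.image_insert, Finset.insert_val_of_notMem, Multiset.map_cons, cyc_fixed hσ]
  · rfl
  · rw [Finset.mem_image]
    rintro ⟨y, hy, h⟩
    rw [cyc_eq_iff] at h
    have := h.symm.eq_of_left hσ
    exact hn (this ▸ hy)

lemma mem_ty {D : Finset X} {σ : Perm X} {c : ℕ} (h : c ∈ ty D σ) :
    ∃ x ∈ D, (cyc σ x).card = c := by
  simpa [ty] using h

section ins
variable {σ : Perm X} {x n : X}

lemma ins_apply_n (σ : Perm X) (x n : X) : (σ * swap x n) n = σ x := by simp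
lemma ins_apply_x (σ : Perm X) (x n : X) : (σ * swap x n) x = σ n := by simp
lemma ins_apply_of (σ : Perm X) {x n y : X} (h1 : y ≠ x) (h2 : y ≠ n) :
    (σ * swap x n) y = σ y := by simp [swap_apply_of_ne_of_ne h1 h2]

lemma sc_ins_n (hn : σ n = n) : (σ * swap x n).SameCycle x n := by
  refine ⟨1, ?_⟩
  simp [hn]

lemma sc_ins_step (hn : σ n = n) (u : X) : (σ * swap x n).SameCycle u (σ u) := by
  by_cases h2 : u = n
  · subst h2; rw [hn]
  by_cases h1 : u = x
  · subst h1
    refine (sc_ins_n hn).trans ⟨1, ?_⟩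
    simp
  · refine ⟨1, ?_⟩
    simp [swap_apply_of_ne_of_ne h1 h2]

lemma sc_ins (hn : σ n = n) {y z : X} (h : σ.SameCycle y z) :
    (σ * swap x n).SameCycle y z :=
  sc_rec σ _ (SameCycle.refl _) (fun _ _ _ h1 h2 => h1.trans h2) (sc_ins_step hn) h

lemma sc_of_ins (hn : σ n = n) {y z : X} (h : (σ * swap x n).SameCycle y z) :
    σ.SameCycle (if y = n then x else y) (if z = n then x else z) := by
  refine sc_rec (σ * swap x n)
    (fun y z => σ.SameCycle (if y = n then x else y) (if z = n then x else z))
    (fun _ => SameCycle.refl _ _) (fun _ _ _ h1 h2 => h1.trans h2) ?_ h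
  intro u
  by_cases h2 : u = n
  · subst h2
    simp only [if_true, ins_apply_n]
    split_ifs with h
    · exact SameCycle.refl _ _
    · exact ⟨1, by simp⟩
  by_cases h1 : u = x
  · subst h1
    simp [hn, h2, SameCycle.refl]
  · rw [ins_apply_of _ h1 h2]
    have : σ u ≠ n := by
      intro h
      apply h2
      apply σ.injective
      rw [h, hn]
    simp only [h2, this, if_false]
    exact ⟨1, by simp⟩

lemma cyc_ins (hn : σ n = n) (hxn : x ≠ n) : cyc (σ * swap x n) x = insert n (cyc σ x) := by
  ext z
  rw [Finset.mem_insert, mem_cyc, mem_cyc]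
  constructor
  · intro h
    have := sc_of_ins hn h
    rw [if_neg hxn] at this
    split_ifs at this with h3
    · exact Or.inl h3
    · exact Or.inr this
  · rintro (rfl | h)
    · exact sc_ins_n hn
    · exact sc_ins hn h

lemma n_notMem_cyc (hn : σ n = n) (hxn : x ≠ n) : n ∉ cyc σ x := by
  rw [mem_cyc]
  intro h
  exact hxn (h.symm.eq_of_left hn).symm

lemma card_cyc_ins (hn : σ n = n) (hxn : x ≠ n) :
    (cyc (σ * swap x n) x).card = (cyc σ x).card + 1 := by
  rw [cyc_ins hn hxn, Finset.card_insert_of_notMem (n_notMem_cyc hn hxn)]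

lemma cyc_ins_of (hn : σ n = n) {y : X} (hy : y ≠ n)
    (h : ¬ σ.SameCycle y x) : cyc (σ * swap x n) y = cyc σ y := by
  ext z
  rw [mem_cyc, mem_cyc]
  constructor
  · intro h'
    have := sc_of_ins hn h'
    rw [if_neg hy] at this
    split_ifs at this with h3
    · exact absurd this h
    · exact this
  · exact sc_ins hn

lemma rest_ins {D : Finset X} (hx : x ∈ D) (hnD : n ∉ D) (hn : σ n = n) :
    rest (insert n D) (σ * swap x n) x = rest D σ x := by
  have hxn : x ≠ n := fun h => hnD (h ▸ hx)
  ext O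
  simp only [rest, Finset.mem_erase, Finset.mem_image, Finset.mem_insert]
  constructor
  · rintro ⟨h1, y, hy, rfl⟩
    have h1' : ¬ (σ * swap x n).SameCycle y x := fun h => h1 (cyc_eq_iff.2 h)
    rcases hy with rfl | hy
    · exact absurd (sc_ins_n hn).symm h1'
    have hyn : y ≠ n := fun h => hnD (h ▸ hy)
    have h2 : ¬ σ.SameCycle y x := fun h => h1' (sc_ins hn h)
    rw [cyc_ins_of hn hyn h2]
    exact ⟨fun h => h2 (cyc_eq_iff.1 h), y, hy, rfl⟩
  · rintro ⟨h1, y, hy, rfl⟩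
    have hyn : y ≠ n := fun h => hnD (h ▸ hy)
    have h2 : ¬ σ.SameCycle y x := fun h => h1 (cyc_eq_iff.2 h)
    refine ⟨?_, y, Or.inr hy, cyc_ins_of hn hyn h2⟩
    rw [← cyc_ins_of hn hyn h2]
    intro h
    rw [cyc_eq_iff] at h
    have := sc_of_ins hn h
    rw [if_neg hyn, if_neg hxn] at this
    exact h2 this

lemma ty_ins {D : Finset X} (hx : x ∈ D) (hnD : n ∉ D) (hn : σ n = n) {c : ℕ}
    {C : Multiset ℕ} (hc : (cyc σ x).card = c) (h : ty D σ = c ::ₘ C) :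
    ty (insert n D) (σ * swap x n) = (c + 1) ::ₘ C := by
  have hxn : x ≠ n := fun h => hnD (h ▸ hx)
  rw [ty_eq (Finset.mem_insert_of_mem hx), rest_ins hx hnD hn, card_cyc_ins hn hxn, hc]
  rw [ty_eq hx, hc, Multiset.cons_inj_right] at h
  rw [h]

lemma cycle_ins (hn : σ n = n) (hx : σ x ≠ x) (h : σ.IsCycle) :
    (σ * swap x n).IsCycle ∧ (σ * swap x n).support = insert n σ.support := by
  have hxn : x ≠ n := fun h => hx (h ▸ hn)
  have hsup : (σ * swap x n).support = insert n σ.support := by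
    ext y
    rw [mem_support, Finset.mem_insert, mem_support]
    by_cases h2 : y = n
    · subst h2
      simp only [ins_apply_n, true_or, iff_true]
      intro h
      exact hxn (σ.injective (h.trans hn.symm))
    by_cases h1 : y = x
    · subst h1
      simp [hn, hx, Ne.symm h2]
    · rw [ins_apply_of _ h1 h2]
      simp [h2]
  refine ⟨⟨x, ?_, ?_⟩, hsup⟩
  · rw [ins_apply_x, hn]; exact hxn.symm
  · intro y hy
    rw [← mem_support, hsup, Finset.mem_insert, mem_support] at hy
    rcases hy with rfl | hy
    · exact sc_ins_n hn
    · exact sc_ins hn (h.sameCycle hx hy)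

end ins

lemma cyc_inv (σ : Perm X) : cyc σ⁻¹ = cyc σ := by
  funext x
  ext z
  rw [mem_cyc, mem_cyc, sameCycle_inv]

lemma ty_inv (D : Finset X) (σ : Perm X) : ty D σ⁻¹ = ty D σ := by
  rw [ty, ty, cyc_inv]

lemma cyc_conj (σ π : Perm X) (x : X) :
    cyc (π * σ * π⁻¹) (π x) = (cyc σ x).image π := by
  ext z
  rw [mem_cyc, sameCycle_conj, Finset.mem_image]
  constructor
  · intro h
    refine ⟨π⁻¹ z, ?_, by simp⟩
    rw [mem_cyc]
    simpa using h
  · rintro ⟨y, hy, rfl⟩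
    rw [mem_cyc] at hy
    simpa using hy

lemma ty_conj (D : Finset X) (σ π : Perm X) :
    ty (D.image π) (π * σ * π⁻¹) = ty D σ := by
  have h : (D.image π).image (cyc (π * σ * π⁻¹)) = (D.image (cyc σ)).image (Finset.image π) := by
    rw [Finset.image_image, Finset.image_image]
    apply Finset.image_congr
    intro x _
    exact cyc_conj σ π x
  rw [ty, h, Finset.image_val_of_injOn (Finset.image_injective π.injective).injOn,
    Multiset.map_map]
  apply Multiset.map_congr rfl
  intro O _
  exact Finset.card_image_of_injective _ π.injective

end basics
section univ
lemma ty_univ {d : ℕ} (σ : Perm (Fin d)) : ty Finset.univ σ = fullCycleType σ := by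
  classical
  have h1 : (Finset.univ.image (cyc σ)) =
      (σ.support.image (cyc σ)) ∪ (σ.supportᶜ.image (cyc σ)) := by
    rw [← Finset.image_union, Finset.union_compl]
  have hdisj : _root_.Disjoint (σ.support.image (cyc σ)) (σ.supportᶜ.image (cyc σ)) := by
    rw [Finset.disjoint_left]
    intro O hO hO'
    rw [Finset.mem_image] at hO hO'
    obtain ⟨x, hx, rfl⟩ := hO
    obtain ⟨y, hy, h⟩ := hO'
    rw [cyc_eq_iff] at h
    rw [Finset.mem_compl, notMem_support] at hy
    have := h.eq_of_left hy
    subst this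
    exact (mem_support.1 hx) hy
  rw [ty, h1, ← Finset.disjUnion_eq_union _ _ hdisj, Finset.disjUnion_val, Multiset.map_add,
    fullCycleType]
  congr 1
  · have : σ.support.image (cyc σ) = σ.cycleFactorsFinset.image support := by
      ext O
      rw [Finset.mem_image, Finset.mem_image]
      constructor
      · rintro ⟨x, hx, rfl⟩
        refine ⟨σ.cycleOf x, cycleOf_mem_cycleFactorsFinset_iff.2 hx, ?_⟩
        ext y
        rw [mem_cyc, mem_support_cycleOf_iff' (mem_support.1 hx)]
      · rintro ⟨c, hc, rfl⟩
        obtain ⟨x, hx⟩ := (mem_cycleFactorsFinset_iff.1 hc).1.nonempty_support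
        have hcx := cycle_is_cycleOf hx hc
        have hxs : x ∈ σ.support := (mem_cycleFactorsFinset_support_le hc) hx
        refine ⟨x, hxs, ?_⟩
        ext y
        rw [mem_cyc, hcx, mem_support_cycleOf_iff' (mem_support.1 hxs)]
    rw [this, Finset.image_val_of_injOn, Multiset.map_map, cycleType_def]
    · intro c hc c' hc' h
      obtain ⟨x, hx⟩ := (mem_cycleFactorsFinset_iff.1 hc).1.nonempty_support
      rw [cycle_is_cycleOf hx hc, cycle_is_cycleOf (h ▸ hx : x ∈ c'.support) hc']
  · rw [Finset.image_val_of_injOn, Multiset.map_map]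
    · rw [Multiset.eq_replicate]
      constructor
      · simp [Finset.card_compl]
      · intro b hb
        rw [Multiset.mem_map] at hb
        obtain ⟨x, hx, rfl⟩ := hb
        rw [Finset.mem_val, Finset.mem_compl, notMem_support] at hx
        simp [cyc_fixed hx]
    · intro x hx y hy h
      rw [Finset.mem_coe, Finset.mem_compl, notMem_support] at hx hy
      rw [cyc_fixed hx, cyc_fixed hy] at h
      simpa using h

lemma conj_of_ty {d : ℕ} {σ τ : Perm (Fin d)} (h : ty Finset.univ σ = ty Finset.univ τ) :
    ∃ π : Perm (Fin d), π * σ * π⁻¹ = τ := by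
  rw [ty_univ, ty_univ] at h
  rw [← isConj_iff, partition_eq_of_isConj]
  ext1
  rw [parts_partition, parts_partition]
  simpa [fullCycleType] using h
end univ
section ops
variable {X : Type} [Fintype X] [DecidableEq X]

/-- `α`, `β` supported on `D`, of types `A`, `C` there, with product a cycle of length `M`. -/
structure G (D : Finset X) (α β : Perm X) (A C : Multiset ℕ) (M : ℕ) (t : Prop) (W : Set X) :
    Prop where
  hα : ∀ y, y ∉ D → α y = y
  hβ : ∀ y, y ∉ D → β y = y
  tA : ty D α = A
  tC : ty D β = C
  hcyc : (α * β).IsCycle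
  hM : (α * β).support.card = M
  hT : t → ∀ x ∈ D, ∃ y, (α * β) y ≠ y ∧ β.SameCycle x y
  hW : ∀ w ∈ W, (α * β) w ≠ w ∧ (α * β) (β⁻¹ w) ≠ β⁻¹ w
  hD : D.card = A.sum

variable {D : Finset X} {α β : Perm X} {A C : Multiset ℕ} {M : ℕ} {t : Prop} {W : Set X}

lemma G.fix (h : G D α β A C M t W) {y : X} (hy : y ∉ D) : (α * β) y = y := by
  rw [Perm.mul_apply, h.hβ y hy, h.hα y hy]

lemma G.W_sub (h : G D α β A C M t W) {w : X} (hw : w ∈ W) : w ∈ D := by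
  by_contra h'
  exact (h.hW w hw).1 (h.fix h')

lemma inv_fix {σ : Perm X} {n : X} (h : σ n = n) : σ⁻¹ n = n := by
  rw [Perm.inv_eq_iff_eq, h]

lemma E1 {a c : ℕ} (h : G D α β (a ::ₘ A) (c ::ₘ C) M t W) {x n : X} (hx : x ∈ D)
    (ha : (cyc α x).card = a) (hc : (cyc β x).card = c) (hn : n ∉ D) (hxW : x ∉ W) :
    G (insert n D) (α * swap x n) (swap x n * β) ((a + 1) ::ₘ A) ((c + 1) ::ₘ C) M t W ∧
      (cyc (α * swap x n) x).card = a + 1 ∧ (cyc (swap x n * β) x).card = c + 1 := by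
  have hαn := h.hα n hn
  have hβn := h.hβ n hn
  have hxn : x ≠ n := fun h => hn (h ▸ hx)
  have hγ : α * swap x n * (swap x n * β) = α * β := by
    rw [mul_assoc, ← mul_assoc (swap x n), swap_mul_self, one_mul]
  have hb : swap x n * β = β * swap (β⁻¹ x) n := by
    rw [swap_mul_eq_mul_swap, inv_fix hβn]
  have hx' : β⁻¹ x ∈ D := by
    by_contra h'
    have := h.hβ _ h'
    rw [show β (β⁻¹ x) = x by simp] at this
    exact h' (this ▸ hx)
  have hxn' : β⁻¹ x ≠ n := fun h => hn (h ▸ hx')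
  have hsc : β.SameCycle (β⁻¹ x) x := ⟨1, by simp⟩
  have hc' : (cyc β (β⁻¹ x)).card = c := by
    rw [cyc_eq_iff.2 hsc, hc]
  refine ⟨⟨?_, ?_, ty_ins hx hn hαn ha h.tA, ?_, ?_, ?_, ?_, ?_, ?_⟩, ?_, ?_⟩
  · intro y hy
    rw [Finset.mem_insert, not_or] at hy
    rw [ins_apply_of _ (fun e : y = x => hy.2 (e.symm ▸ hx)) hy.1, h.hα y hy.2]
  · intro y hy
    rw [Finset.mem_insert, not_or] at hy
    rw [hb, ins_apply_of _ (fun e : y = β⁻¹ x => hy.2 (e.symm ▸ hx')) hy.1, h.hβ y hy.2]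
  · rw [hb]
    exact ty_ins hx' hn hβn hc' h.tC
  · rw [hγ]; exact h.hcyc
  · rw [hγ]; exact h.hM
  · intro ht y hy
    rw [hγ, hb]
    rw [Finset.mem_insert] at hy
    rcases hy with rfl | hy
    · obtain ⟨z, hz, hz'⟩ := h.hT ht _ hx'
      exact ⟨z, hz, (sc_ins_n hβn).symm.trans (sc_ins hβn hz')⟩
    · obtain ⟨z, hz, hz'⟩ := h.hT ht _ hy
      exact ⟨z, hz, sc_ins hβn hz'⟩
  · intro w hw
    have e : (swap x n * β)⁻¹ w = β⁻¹ w := by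
      rw [mul_inv_rev, swap_inv, Perm.mul_apply, swap_apply_of_ne_of_ne]
      · rintro rfl; exact hxW hw
      · rintro rfl; exact hn (h.W_sub hw)
    rw [hγ, e]
    exact h.hW w hw
  · rw [Finset.card_insert_of_notMem hn, h.hD]
    simp; omega
  · rw [card_cyc_ins hαn hxn, ha]
  · rw [hb, ← cyc_eq_iff.2 (sc_ins (n := n) (x := β⁻¹ x) hβn hsc), card_cyc_ins hβn hxn', hc']

lemma exists_new (h : D.card < Fintype.card X) : ∃ n, n ∉ D := by
  by_contra! h'
  rw [Finset.eq_univ_iff_forall.2 h', Finset.card_univ] at h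
  exact lt_irrefl _ h

lemma E1s (j : ℕ) : ∀ (D : Finset X) (α β : Perm X) (a c : ℕ) (x : X),
    G D α β (a ::ₘ A) (c ::ₘ C) M t W → x ∈ D →
    (cyc α x).card = a → (cyc β x).card = c → x ∉ W → D.card + j ≤ Fintype.card X →
    ∃ D' α' β', G D' α' β' ((a + j) ::ₘ A) ((c + j) ::ₘ C) M t W := by
  induction j with
  | zero => intro D α β a c x h _ _ _ _ _; exact ⟨D, α, β, h⟩
  | succ j ih =>
    intro D α β a c x h hx ha hc hxW hj
    obtain ⟨n, hn⟩ := exists_new (D := D) (by omega)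
    obtain ⟨h', ha', hc'⟩ := E1 h hx ha hc hn hxW
    have := ih _ _ _ _ _ x h' (Finset.mem_insert_of_mem hx) ha' hc' hxW
      (by rw [Finset.card_insert_of_notMem hn]; omega)
    rw [add_assoc, add_comm 1 j, add_assoc, add_comm 1 j] at this
    exact this

lemma E2 {c : ℕ} (h : G D α β A (c ::ₘ C) M t W) {x n : X} (hx : (α * β) x ≠ x)
    (hc : (cyc β x).card = c) (hn : n ∉ D) :
    G (insert n D) α (β * swap x n) (1 ::ₘ A) ((c + 1) ::ₘ C) (M + 1) t W ∧
      (cyc α n).card = 1 ∧ (cyc (β * swap x n) n).card = c + 1 := by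
  have hαn := h.hα n hn
  have hβn := h.hβ n hn
  have hγn := h.fix hn
  have hxD : x ∈ D := by
    by_contra h'; exact hx (h.fix h')
  have hxn : x ≠ n := fun h => hn (h ▸ hxD)
  have hγ : α * (β * swap x n) = α * β * swap x n := by rw [mul_assoc]
  obtain ⟨k1, k2⟩ := cycle_ins hγn hx h.hcyc
  refine ⟨⟨?_, ?_, ?_, ty_ins hxD hn hβn hc h.tC, ?_, ?_, ?_, ?_, ?_⟩, ?_, ?_⟩
  · intro y hy
    rw [Finset.mem_insert, not_or] at hy
    exact h.hα y hy.2
  · intro y hy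
    rw [Finset.mem_insert, not_or] at hy
    rw [ins_apply_of _ (fun e : y = x => hy.2 (e.symm ▸ hxD)) hy.1, h.hβ y hy.2]
  · rw [ty_fixed hn hαn, h.tA]
  · rw [hγ]; exact k1
  · rw [hγ, k2, Finset.card_insert_of_notMem, h.hM]
    rw [notMem_support]; exact hγn
  · intro ht y hy
    rw [hγ]
    simp only [← mem_support, k2, Finset.mem_insert] at hy ⊢
    rcases hy with rfl | hy
    · exact ⟨y, Or.inl rfl, SameCycle.refl _ _⟩
    · obtain ⟨z, hz, hz'⟩ := h.hT ht _ hy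
      exact ⟨z, Or.inr (mem_support.2 hz), sc_ins hβn hz'⟩
  · intro w hw
    have hw' := h.hW w hw
    rw [hγ]
    simp only [← mem_support, k2, Finset.mem_insert] at hw' ⊢
    refine ⟨Or.inr hw'.1, ?_⟩
    rw [mul_inv_rev, swap_inv, Perm.mul_apply]
    by_cases h1 : β⁻¹ w = x
    · rw [h1, swap_apply_left]; exact Or.inl rfl
    · by_cases h2 : β⁻¹ w = n
      · rw [h2, swap_apply_right]; exact Or.inr (mem_support.2 hx)
      · rw [swap_apply_of_ne_of_ne h1 h2]; exact Or.inr hw'.2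
  · rw [Finset.card_insert_of_notMem hn, h.hD]
    simp; omega
  · rw [cyc_fixed hαn]; rfl
  · rw [← cyc_eq_iff.2 (sc_ins_n hβn), card_cyc_ins hβn hxn, hc]

lemma E0 (h : G D α β A C M t W) {n : X} (hn : n ∉ D) :
    G (insert n D) α β (1 ::ₘ A) (1 ::ₘ C) M False W := by
  have hαn := h.hα n hn
  have hβn := h.hβ n hn
  refine ⟨?_, ?_, ?_, ?_, h.hcyc, h.hM, fun h => h.elim, h.hW, ?_⟩
  · intro y hy
    rw [Finset.mem_insert, not_or] at hy
    exact h.hα y hy.2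
  · intro y hy
    rw [Finset.mem_insert, not_or] at hy
    exact h.hβ y hy.2
  · rw [ty_fixed hn hαn, h.tA]
  · rw [ty_fixed hn hβn, h.tC]
  · rw [Finset.card_insert_of_notMem hn, h.hD]
    simp; omega

lemma E3 {w : X} (h : G D α β A C M t {w}) {n m : X} (hn : n ∉ D) (hm : m ∉ D) (hnm : n ≠ m) :
    G (insert m (insert n D)) (α * swap n m) (swap w m * β * swap w m * swap w n)
      (2 ::ₘ A) (2 ::ₘ C) (M + 2) t {w} ∧
      (cyc (α * swap n m) n).card = 2 ∧
      (cyc (swap w m * β * swap w m * swap w n) n).card = 2 := by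
  have hαn := h.hα n hn
  have hβn := h.hβ n hn
  have hγn := h.fix hn
  have hαm := h.hα m hm
  have hβm := h.hβ m hm
  have hγm := h.fix hm
  have hwD : w ∈ D := h.W_sub rfl
  have hwn : w ≠ n := fun h => hn (h ▸ hwD)
  have hwm : w ≠ m := fun h => hm (h ▸ hwD)
  obtain ⟨hw1, hw2⟩ := h.hW w rfl
  set β₁ := swap w m * β * swap w m with hβ₁
  have hβ₁c : β₁ = swap w m * β * (swap w m)⁻¹ := by rw [swap_inv]
  have hβ₁w : β₁ w = w := by simp [hβ₁, hβm]
  have hβ₁n : β₁ n = n := by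
    simp [hβ₁, swap_apply_of_ne_of_ne hwn.symm hnm, hβn]
  have hw'm : β⁻¹ w ≠ m := by
    intro h'
    rw [h'] at hw2
    exact hw2 hγm
  have hw'n : β⁻¹ w ≠ n := by
    intro h'
    rw [h'] at hw2
    exact hw2 hγn
  have hbw : ∀ y, β y = w ↔ y = β⁻¹ w := by
    intro y; rw [Perm.eq_inv_iff_eq]
  have hγ : α * swap n m * (β₁ * swap w n) =
      α * β * swap w m * swap (swap w m (β⁻¹ w)) n := by
    rw [mul_assoc, mul_assoc α, mul_assoc α]
    congr 1
    have hbn : ∀ y, β y = n ↔ y = n := by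
      intro y; rw [← β.injective.eq_iff (a := y), hβn]
    have hbm : ∀ y, β y = m ↔ y = m := by
      intro y; rw [← β.injective.eq_iff (a := y), hβm]
    have hbw' : β (β⁻¹ w) = w := by simp
    generalize β⁻¹ w = w' at *
    ext y
    simp only [hβ₁, Perm.mul_apply, swap_apply_def]
    clear_value β₁
    grind
  obtain ⟨k1, k2⟩ := cycle_ins hγm hw1 h.hcyc
  have hn1 : (α * β * swap w m) n = n := by
    rw [ins_apply_of _ hwn.symm hnm, hγn]
  have hs2 : (α * β * swap w m) (swap w m (β⁻¹ w)) ≠ swap w m (β⁻¹ w) := by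
    rw [← mem_support, k2, Finset.mem_insert]
    by_cases h1 : β⁻¹ w = w
    · rw [h1, swap_apply_left]; exact Or.inl rfl
    · rw [swap_apply_of_ne_of_ne h1 hw'm]; exact Or.inr (mem_support.2 hw2)
  obtain ⟨l1, l2⟩ := cycle_ins hn1 hs2 k1
  rw [k2] at l2
  have hD1 : insert w (D.image (swap w m)) = insert m D := by
    ext y
    simp only [Finset.mem_insert, Finset.mem_image]
    constructor
    · rintro (rfl | ⟨z, hz, rfl⟩)
      · exact Or.inr hwD
      · by_cases h1 : z = w
        · subst h1; simp
        · rw [swap_apply_of_ne_of_ne h1 (fun e : z = m => hm (e ▸ hz))]; exact Or.inr hz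
    · rintro (rfl | hy)
      · exact Or.inr ⟨w, hwD, by simp⟩
      · by_cases h1 : y = w
        · exact Or.inl h1
        · exact Or.inr ⟨y, hy, swap_apply_of_ne_of_ne h1 (fun h => hm (h ▸ hy))⟩
  have hwD1 : w ∉ D.image (swap w m) := by
    rw [Finset.mem_image]
    rintro ⟨z, hz, hz'⟩
    rw [swap_apply_eq_iff, swap_apply_left] at hz'
    exact hm (hz' ▸ hz)
  have hty1 : ty (insert m D) β₁ = 1 ::ₘ C := by
    rw [← hD1, ty_fixed hwD1 hβ₁w, hβ₁c, ty_conj, h.tC]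
  have hcw : (cyc β₁ w).card = 1 := by rw [cyc_fixed hβ₁w]; rfl
  have hcn : (cyc α n).card = 1 := by rw [cyc_fixed hαn]; rfl
  have hnD1 : n ∉ insert m D := by simp [hn, hnm]
  have hmD1 : m ∉ insert n D := by simp [hm, hnm.symm]
  refine ⟨⟨?_, ?_, ?_, ?_, ?_, ?_, ?_, ?_, ?_⟩, ?_, ?_⟩
  · intro y hy
    simp only [Finset.mem_insert, not_or] at hy
    rw [ins_apply_of _ hy.2.1 hy.1, h.hα y hy.2.2]
  · intro y hy
    simp only [Finset.mem_insert, not_or] at hy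
    have hyw : y ≠ w := fun h => hy.2.2 (h ▸ hwD)
    rw [ins_apply_of _ hyw hy.2.1]
    simp [hβ₁, swap_apply_of_ne_of_ne hyw hy.1, h.hβ y hy.2.2]
  · exact ty_ins (Finset.mem_insert_self _ _) hmD1 hαm hcn (by rw [ty_fixed hn hαn, h.tA])
  · rw [Finset.insert_comm]
    exact ty_ins (Finset.mem_insert_of_mem hwD) hnD1 hβ₁n hcw hty1
  · rw [hγ]; exact l1
  · rw [hγ, l2, Finset.card_insert_of_notMem, Finset.card_insert_of_notMem, h.hM]
    · rw [notMem_support]; exact hγm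
    · rw [Finset.mem_insert, notMem_support.2 hγn |> iff_false_intro]; simp [hnm]
  · intro ht y hy
    rw [hγ]
    simp only [← mem_support, l2, Finset.mem_insert] at hy ⊢
    rcases hy with rfl | rfl | hy
    · exact ⟨y, Or.inr (Or.inl rfl), SameCycle.refl _ _⟩
    · exact ⟨y, Or.inl rfl, SameCycle.refl _ _⟩
    · by_cases hyw : y = w
      · subst hyw
        exact ⟨y, Or.inr (Or.inr (mem_support.2 hw1)), SameCycle.refl _ _⟩
      obtain ⟨z, hz, hz'⟩ := h.hT ht _ hy
      have e : β₁.SameCycle (swap w m y) (swap w m z) := by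
        rw [hβ₁c, sameCycle_conj]; simpa using hz'
      rw [swap_apply_of_ne_of_ne hyw (fun e : y = m => hm (e ▸ hy))] at e
      refine ⟨_, ?_, sc_ins hβ₁n e⟩
      by_cases hzw : z = w
      · subst hzw; simp
      · rw [swap_apply_of_ne_of_ne hzw]
        · exact Or.inr (Or.inr (mem_support.2 hz))
        · rintro rfl; exact hz hγm
  · intro v hv
    rw [Set.mem_singleton_iff] at hv
    subst hv
    have e : (β₁ * swap v n)⁻¹ v = n := by
      rw [Perm.inv_eq_iff_eq, ins_apply_n, hβ₁w]
    rw [e, hγ]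
    simp only [← mem_support, l2, Finset.mem_insert]
    exact ⟨Or.inr (Or.inr (mem_support.2 hw1)), Or.inl trivial⟩
  · rw [Finset.card_insert_of_notMem hmD1, Finset.card_insert_of_notMem hn, h.hD]
    simp; omega
  · rw [card_cyc_ins hαm hnm, hcn]
  · rw [← cyc_eq_iff.2 (sc_ins_n hβ₁n), card_cyc_ins hβ₁n hwn, hcw]

lemma Gsymm (h : G D α β A C M True W) (hs : A.sum = C.sum) :
    G D β⁻¹ α⁻¹ C A M True W := by
  have hγ : β⁻¹ * α⁻¹ = (α * β)⁻¹ := by rw [mul_inv_rev]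
  have hmv : ∀ y, (α * β)⁻¹ y ≠ y ↔ (α * β) y ≠ y := by
    intro y
    rw [← mem_support, support_inv, mem_support]
  refine ⟨fun y hy => inv_fix (h.hβ y hy), fun y hy => inv_fix (h.hα y hy), ?_, ?_, ?_, ?_, ?_,
    ?_, by rw [h.hD, hs]⟩
  · rw [ty_inv, h.tC]
  · rw [ty_inv, h.tA]
  · rw [hγ]; exact h.hcyc.inv
  · rw [hγ, support_inv, h.hM]
  · intro _ x hx
    by_contra! hcon
    rw [hγ] at hcon
    simp only [hmv, sameCycle_inv] at hcon
    -- the α-cycle of x is fixed by γ pointwise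
    have key : ∀ y, α.SameCycle x y → (α * β) y = y := by
      intro y hy
      by_contra h'
      exact hcon y h' hy
    have key2 : ∀ y z, β.SameCycle y z → α.SameCycle x y → α.SameCycle x z := by
      intro y z hyz
      refine sc_rec β (fun y z => α.SameCycle x y → α.SameCycle x z) (fun _ h => h)
        (fun _ _ _ h1 h2 h3 => h2 (h1 h3)) ?_ hyz
      intro u hu
      have := key u hu
      refine hu.trans ⟨-1, ?_⟩
      rw [zpow_neg_one, Perm.inv_eq_iff_eq]
      exact this.symm
    obtain ⟨y, hy, hy'⟩ := h.hT trivial x hx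
    exact hy (key y (key2 x y hy' (SameCycle.refl _ _)))
  · intro w hw
    obtain ⟨h1, h2⟩ := h.hW w hw
    rw [hγ, hmv, hmv, inv_inv]
    refine ⟨h1, ?_⟩
    intro h3
    apply h2
    have : (α * β) (β⁻¹ w) = α w := by simp
    apply (α * β).injective
    rw [this, h3]

end ops
section exist
variable {X : Type} [Fintype X] [DecidableEq X]

/-- Existence of a configuration. -/
def Ex (A C : Multiset ℕ) (M : ℕ) (t : Prop) (W : Set X) : Prop :=
  ∃ (D : Finset X) (α β : Perm X), G D α β A C M t W

variable {A C : Multiset ℕ} {M : ℕ} {t : Prop} {W : Set X}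

lemma P1 {c k : ℕ} (h : Ex A (c ::ₘ C) M True W) (hk : 1 ≤ k)
    (hX : A.sum + k ≤ Fintype.card X) : Ex (k ::ₘ A) ((c + k) ::ₘ C) (M + 1) True W := by
  obtain ⟨D, α, β, h⟩ := h
  obtain ⟨x, hx, hc⟩ := mem_ty (D := D) (σ := β) (c := c) (by rw [h.tC]; simp)
  obtain ⟨y, hy, hxy⟩ := h.hT trivial x hx
  rw [cyc_eq_iff.2 hxy] at hc
  have hD := h.hD
  obtain ⟨n, hn⟩ := exists_new (D := D) (by omega)
  obtain ⟨h', h1, h2⟩ := E2 h hy hc hn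
  have hnW : n ∉ W := fun e => hn (h.W_sub e)
  have := E1s (k - 1) _ _ _ _ _ n h' (Finset.mem_insert_self _ _) h1 h2 hnW
    (by rw [Finset.card_insert_of_notMem hn]; omega)
  rw [show 1 + (k - 1) = k by omega, show c + 1 + (k - 1) = c + k by omega] at this
  exact this

lemma P0 {k : ℕ} (h : Ex A C M t W) (hk : 1 ≤ k)
    (hX : A.sum + k ≤ Fintype.card X) : Ex (k ::ₘ A) (k ::ₘ C) M False W := by
  obtain ⟨D, α, β, h⟩ := h
  have hD := h.hD
  obtain ⟨n, hn⟩ := exists_new (D := D) (by omega)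
  have h' := E0 h hn
  have hnW : n ∉ W := fun e => hn (h.W_sub e)
  have := E1s (k - 1) _ _ _ _ _ n h' (Finset.mem_insert_self _ _)
    (by rw [cyc_fixed (h.hα n hn)]; rfl) (by rw [cyc_fixed (h.hβ n hn)]; rfl) hnW
    (by rw [Finset.card_insert_of_notMem hn]; omega)
  rw [show 1 + (k - 1) = k by omega] at this
  exact this

lemma P2 {k : ℕ} {w : X} (h : Ex A C M True {w}) (hk : 2 ≤ k)
    (hX : A.sum + k ≤ Fintype.card X) : Ex (k ::ₘ A) (k ::ₘ C) (M + 2) True {w} := by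
  obtain ⟨D, α, β, h⟩ := h
  have hD := h.hD
  obtain ⟨n, hn⟩ := exists_new (D := D) (by omega)
  obtain ⟨m, hm⟩ := exists_new (D := insert n D)
    (by rw [Finset.card_insert_of_notMem hn]; omega)
  have hm' := hm
  rw [Finset.mem_insert, not_or] at hm'
  obtain ⟨h', h1, h2⟩ := E3 h hn hm'.2 (Ne.symm hm'.1)
  have hnW : n ∉ ({w} : Set X) := fun e => hn (h.W_sub e)
  have := E1s (k - 2) _ _ _ _ _ n h' (by simp) h1 h2 hnW
    (by rw [Finset.card_insert_of_notMem hm, Finset.card_insert_of_notMem hn]; omega)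
  rw [show 2 + (k - 2) = k by omega] at this
  exact this

lemma Ex.symm (h : Ex A C M True W) (hs : A.sum = C.sum) : Ex C A M True W := by
  obtain ⟨D, α, β, h⟩ := h
  exact ⟨D, _, _, Gsymm h hs⟩

section embed
variable {k : ℕ} (f : Fin k ↪ X) {σ : Perm (Fin k)} {σ' : Perm X}

lemma cyc_embed (h : ∀ a, σ' (f a) = f (σ a)) (a : Fin k) :
    cyc σ' (f a) = (cyc σ a).image f := by
  ext z
  rw [mem_cyc, Finset.mem_image]
  constructor
  · intro hz
    have := sc_rec σ' (fun y z => ∀ a, y = f a → ∃ b, z = f b ∧ σ.SameCycle a b)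
      (fun x a e => ⟨a, e, SameCycle.refl _ _⟩) ?_ ?_ hz a rfl
    · obtain ⟨b, hb, hb'⟩ := this
      exact ⟨b, mem_cyc.2 hb', hb.symm⟩
    · intro x y z h1 h2 a ha
      obtain ⟨b, hb, hb'⟩ := h1 a ha
      obtain ⟨c, hc, hc'⟩ := h2 b hb
      exact ⟨c, hc, hb'.trans hc'⟩
    · rintro _ a rfl
      exact ⟨σ a, h a, 1, by simp⟩
  · rintro ⟨b, hb, rfl⟩
    rw [mem_cyc] at hb
    refine sc_rec σ (fun a b => σ'.SameCycle (f a) (f b)) (fun _ => SameCycle.refl _ _)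
      (fun _ _ _ h1 h2 => h1.trans h2) ?_ hb
    intro u
    exact ⟨1, by simp [h]⟩

lemma ty_embed (h : ∀ a, σ' (f a) = f (σ a)) :
    ty (Finset.univ.image f) σ' = ty Finset.univ σ := by
  have h : (Finset.univ.image f).image (cyc σ') =
      (Finset.univ.image (cyc σ)).image (Finset.image f) := by
    rw [Finset.image_image, Finset.image_image]
    apply Finset.image_congr
    intro x _
    exact cyc_embed f h x
  rw [ty, h, Finset.image_val_of_injOn (Finset.image_injective f.injective).injOn,
    Multiset.map_map]
  apply Multiset.map_congr rfl
  intro O _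
  exact Finset.card_image_of_injective _ f.injective

lemma base_embed (α β : Perm (Fin k)) (hk : k ≤ Fintype.card X) (x0 : Fin k)
    (hfix : ∀ a, (α * β) a ≠ a) (hcy : ∀ b, (α * β).SameCycle x0 b)
    (hs : (ty Finset.univ α).sum = k) :
    ∃ w : X, Ex (ty Finset.univ α) (ty Finset.univ β) k True {w} := by
  classical
  obtain ⟨f⟩ : Nonempty (Fin k ↪ X) :=
    Function.Embedding.nonempty_of_card_le (by simpa using hk)
  have ha : ∀ σ : Perm (Fin k), ∀ a, σ.viaFintypeEmbedding f (f a) = f (σ a) :=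
    fun σ a => viaFintypeEmbedding_apply_image σ f a
  have hn : ∀ σ : Perm (Fin k), ∀ y, y ∉ Finset.univ.image f →
      σ.viaFintypeEmbedding f y = y := by
    intro σ y hy
    apply viaFintypeEmbedding_apply_notMem_range
    simpa using hy
  have hmul : ∀ a, (α.viaFintypeEmbedding f * β.viaFintypeEmbedding f) (f a) =
      f ((α * β) a) := by
    intro a; rw [Perm.mul_apply, ha, ha, Perm.mul_apply]
  have hsup : ∀ y, (α.viaFintypeEmbedding f * β.viaFintypeEmbedding f) y ≠ y ↔
      y ∈ Finset.univ.image f := by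
    intro y
    constructor
    · intro h
      by_contra h'
      apply h
      rw [Perm.mul_apply, hn _ _ h', hn _ _ h']
    · intro h
      rw [Finset.mem_image] at h
      obtain ⟨a, -, rfl⟩ := h
      rw [hmul]
      exact fun h => hfix a (f.injective h)
  have hcard : (Finset.univ.image f).card = k := by
    rw [Finset.card_image_of_injective _ f.injective, Finset.card_univ, Fintype.card_fin]
  refine ⟨f x0, Finset.univ.image f, α.viaFintypeEmbedding f, β.viaFintypeEmbedding f,
    hn α, hn β, ty_embed f (ha α), ty_embed f (ha β), ?_, ?_, ?_, ?_, ?_⟩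
  · refine ⟨f x0, (hsup _).2 (by simp), ?_⟩
    intro y hy
    rw [hsup, Finset.mem_image] at hy
    obtain ⟨b, -, rfl⟩ := hy
    rw [← mem_cyc, cyc_embed f hmul]
    exact Finset.mem_image_of_mem _ (mem_cyc.2 (hcy b))
  · convert hcard
    ext y
    rw [mem_support, hsup]
  · intro _ x hx
    exact ⟨x, (hsup x).2 hx, SameCycle.refl _ _⟩
  · intro w hw
    rw [Set.mem_singleton_iff] at hw
    subst hw
    have e : (β.viaFintypeEmbedding f)⁻¹ (f x0) = f (β⁻¹ x0) := by
      rw [Perm.inv_eq_iff_eq, ha]; simp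
    rw [e, hsup, hsup]
    simp
  · rw [hcard, hs]

lemma ty_fin (σ : Perm (Fin k)) : ty Finset.univ σ =
    (Finset.univ.image (fun x => Finset.univ.filter
      (fun y => ∃ i : Fin (k + 2), (σ)^[(i : ℕ)] x = y))).val.map Finset.card := by
  have : cyc σ = (fun x => Finset.univ.filter
      (fun y => ∃ i : Fin (k + 2), (σ)^[(i : ℕ)] x = y)) := by
    funext x
    ext y
    rw [mem_cyc, Finset.mem_filter]
    constructor
    · intro h
      obtain ⟨i, -, hi, e⟩ := SameCycle.exists_pow_eq σ h
      have := Finset.card_le_univ (σ.cycleOf x).support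
      rw [Fintype.card_fin] at this
      refine ⟨Finset.mem_univ _, ⟨i, by omega⟩, ?_⟩
      rw [← e]
      simp [Perm.iterate_eq_pow]
    · rintro ⟨-, i, e⟩
      rw [Perm.iterate_eq_pow] at e
      exact ⟨i, by simpa using e⟩
  rw [ty, this]
end embed

lemma base3 (h : 3 ≤ Fintype.card X) : ∃ w : X, Ex {3} {3} 3 True {w} := by
  have e : ty Finset.univ (Equiv.addRight (1 : Fin 3)) = {3} := by
    rw [ty_fin]; decide
  have := base_embed (Equiv.addRight (1 : Fin 3)) (Equiv.addRight (1 : Fin 3)) h 0 (by decide)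
    (by
      have : ∀ b : Fin 3, ∃ i : Fin 3,
        ((Equiv.addRight (1 : Fin 3) * Equiv.addRight (1 : Fin 3) : Perm (Fin 3)))^[(i : ℕ)] 0 = b := by
        decide
      intro b
      obtain ⟨i, hi⟩ := this b
      rw [Perm.iterate_eq_pow] at hi
      exact ⟨i, by simpa using hi⟩) (by rw [e]; rfl)
  rwa [e] at this

lemma base4 (h : 4 ≤ Fintype.card X) : ∃ w : X, Ex {2, 2} {4} 4 True {w} := by
  have e : ty Finset.univ (Equiv.addRight (1 : Fin 4)) = {4} := by
    rw [ty_fin]; decide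
  have e' : ty Finset.univ (Equiv.addRight (2 : Fin 4)) = {2, 2} := by
    rw [ty_fin]; decide
  have := base_embed (Equiv.addRight (2 : Fin 4)) (Equiv.addRight (1 : Fin 4)) h 0 (by decide)
    (by
      have : ∀ b : Fin 4, ∃ i : Fin 4,
        ((Equiv.addRight (2 : Fin 4) * Equiv.addRight (1 : Fin 4) : Perm (Fin 4)))^[(i : ℕ)] 0 = b := by
        decide
      intro b
      obtain ⟨i, hi⟩ := this b
      rw [Perm.iterate_eq_pow] at hi
      exact ⟨i, by simpa using hi⟩) (by rw [e']; rfl)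
  rwa [e, e'] at this

set_option maxRecDepth 20000 in
lemma base6 (h : 6 ≤ Fintype.card X) : ∃ w : X, Ex {2, 2, 2} {3, 3} 6 True {w} := by
  have e : ty Finset.univ (Equiv.addRight (2 : Fin 6)) = {3, 3} := by
    rw [ty_fin]; decide
  have e' : ty Finset.univ (Equiv.addRight (3 : Fin 6)) = {2, 2, 2} := by
    rw [ty_fin]; decide
  have := base_embed (Equiv.addRight (3 : Fin 6)) (Equiv.addRight (2 : Fin 6)) h 0 (by decide)
    (by
      have : ∀ b : Fin 6, ∃ i : Fin 6,
        ((Equiv.addRight (3 : Fin 6) * Equiv.addRight (2 : Fin 6) : Perm (Fin 6)))^[(i : ℕ)] 0 = b := by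
        decide
      intro b
      obtain ⟨i, hi⟩ := this b
      rw [Perm.iterate_eq_pow] at hi
      exact ⟨i, by simpa using hi⟩) (by rw [e']; rfl)
  rwa [e, e'] at this

lemma card_cyc_of_singleton {D : Finset X} {σ : Perm X} {c : ℕ} (h : ty D σ = {c}) {x : X}
    (hx : x ∈ D) : (cyc σ x).card = c := by
  have := ty_eq (σ := σ) hx
  rw [h] at this
  have h2 : (cyc σ x).card ∈ ({c} : Multiset ℕ) := by rw [this]; simp
  simpa using h2

lemma baseK {k : ℕ} (hk : 3 ≤ k) (h : k ≤ Fintype.card X) :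
    ∃ w : X, Ex {k} {k} 3 True {w} := by
  obtain ⟨w, D, α, β, hG⟩ := base3 (X := X) (by omega)
  have hD : D.card = 3 := hG.hD
  obtain ⟨x, hx, hxw⟩ : ∃ x ∈ D, x ≠ w := by
    apply Finset.exists_mem_ne
    omega
  obtain ⟨D', α', β', h'⟩ := E1s (A := 0) (C := 0) (k - 3) D α β 3 3 x hG hx
    (card_cyc_of_singleton hG.tA hx) (card_cyc_of_singleton hG.tC hx) hxw (by omega)
  rw [show 3 + (k - 3) = k by omega] at h'
  exact ⟨w, D', α', β', h'⟩

end exist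
section genus
variable {X : Type} [Fintype X] [DecidableEq X]

lemma ms_le {k : ℕ} {A : Multiset ℕ} (h : ∀ a ∈ A, k ≤ a) : k * A.card ≤ A.sum := by
  have := Multiset.card_nsmul_le_sum h
  rw [smul_eq_mul] at this
  rw [mul_comm]; exact this

lemma ms_eq {k : ℕ} {A : Multiset ℕ} (h : ∀ a ∈ A, k ≤ a) (hs : A.sum = k * A.card) :
    A = Multiset.replicate A.card k := by
  rw [Multiset.eq_replicate]
  refine ⟨rfl, fun b hb => ?_⟩
  obtain ⟨A', rfl⟩ := Multiset.exists_cons_of_mem hb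
  have h1 := h b hb
  have h2 := ms_le (A := A') (fun a ha => h a (Multiset.mem_cons_of_mem ha))
  simp only [Multiset.sum_cons, Multiset.card_cons] at hs
  nlinarith

/-- Induction hypothesis. -/
def IH (X : Type) [Fintype X] [DecidableEq X] (N : ℕ) : Prop :=
  ∀ A C : Multiset ℕ, A.card + C.card < N → (∀ a ∈ A, 1 ≤ a) → (∀ c ∈ C, 1 ≤ c) →
    A.sum = C.sum → A.card + C.card + 1 ≤ A.sum → A.sum ≤ Fintype.card X →
    ∃ w : X, Ex A C (A.card + C.card + 1) True {w}

lemma step {N : ℕ} (ih : IH X N) (A C : Multiset ℕ) (hN : A.card + C.card ≤ N) (k : ℕ)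
    (hk : 1 ≤ k) (hkA : k ∈ A)
    (hA : ∀ a ∈ A, k ≤ a) (hC : ∀ c ∈ C, k ≤ c) (hs : A.sum = C.sum)
    (hrs : A.card + C.card + 1 ≤ A.sum) (hX : A.sum ≤ Fintype.card X) :
    ∃ w : X, Ex A C (A.card + C.card + 1) True {w} := by
  obtain ⟨A', rfl⟩ := Multiset.exists_cons_of_mem hkA
  have hA' : ∀ a ∈ A', k ≤ a := fun a ha => hA a (Multiset.mem_cons_of_mem ha)
  have lA := ms_le hA
  have lA' := ms_le hA'
  have lC := ms_le hC
  simp only [Multiset.sum_cons, Multiset.card_cons] at *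
  by_cases hP1 : (∃ c ∈ C, k < c) ∧ (A'.card + 1) + C.card + k ≤ k + A'.sum
  · obtain ⟨⟨c, hc, hkc⟩, hS⟩ := hP1
    obtain ⟨C', rfl⟩ := Multiset.exists_cons_of_mem hc
    simp only [Multiset.sum_cons, Multiset.card_cons] at *
    obtain ⟨w, hw⟩ := ih A' ((c - k) ::ₘ C') (by simp; omega)
      (fun a ha => hk.trans (hA' a ha))
      (by
        intro x hx
        rw [Multiset.mem_cons] at hx
        rcases hx with rfl | hx
        · omega
        · exact hk.trans (hC x (Multiset.mem_cons_of_mem hx)))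
      (by simp; omega) (by simp; omega) (by omega)
    refine ⟨w, ?_⟩
    have := P1 hw hk (by omega)
    rw [show c - k + k = c by omega] at this
    convert this using 1
    simp; omega
  by_cases hP2 : k ∈ C ∧ 2 ≤ k ∧ (A'.card + 1) + C.card + k ≤ k + A'.sum + 1
  · obtain ⟨hc, hk2, hS⟩ := hP2
    obtain ⟨C', rfl⟩ := Multiset.exists_cons_of_mem hc
    simp only [Multiset.sum_cons, Multiset.card_cons] at *
    obtain ⟨w, hw⟩ := ih A' C' (by omega)
      (fun a ha => hk.trans (hA' a ha))
      (fun a ha => hk.trans (hC a (Multiset.mem_cons_of_mem ha)))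
      (by omega) (by omega) (by omega)
    refine ⟨w, ?_⟩
    have := P2 hw hk2 (by omega)
    convert this using 1
    omega
  by_cases hkC : k ∈ C
  · have hk2 : 2 ≤ k := by
      by_contra hk1
      have hk1 : k = 1 := by omega
      subst hk1
      apply hP1
      refine ⟨?_, by omega⟩
      by_contra! hcon
      have e : C = Multiset.replicate C.card 1 := by
        rw [Multiset.eq_replicate]
        exact ⟨rfl, fun b hb => le_antisymm (hcon b hb) (hC b hb)⟩
      have : C.sum = C.card := by
        conv_lhs => rw [e]
        simp
      omega
    have h3 : k + A'.sum + 2 ≤ A'.card + 1 + C.card + k := by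
      by_contra h
      exact hP2 ⟨hkC, hk2, by omega⟩
    have hA0 : A' = 0 := by
      by_contra h0
      have hpos : 1 ≤ A'.card := Multiset.card_pos.2 h0
      have hd : k ≤ A'.sum := by nlinarith
      rcases Nat.eq_or_lt_of_le hk2 with rfl | hk3
      · omega
      · obtain ⟨e, rfl⟩ := Nat.exists_eq_add_of_lt hk3
        nlinarith
    subst hA0
    simp only [Multiset.sum_zero, Multiset.card_zero] at *
    obtain ⟨C', rfl⟩ := Multiset.exists_cons_of_mem hkC
    have lC' := ms_le (k := k) (A := C') (fun a ha => hC a (Multiset.mem_cons_of_mem ha))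
    simp only [Multiset.sum_cons, Multiset.card_cons] at *
    have : C'.card = 0 := by
      by_contra h0
      have : 1 ≤ C'.card := by omega
      nlinarith
    rw [Multiset.card_eq_zero] at this
    subst this
    simp only [Multiset.sum_zero, Multiset.card_zero] at *
    exact baseK (by omega) (by omega)
  · have hC' : ∀ c ∈ C, k + 1 ≤ c := by
      intro c hc
      rcases Nat.eq_or_lt_of_le (hC c hc) with rfl | h
      · exact absurd hc hkC
      · exact h
    have lC' := ms_le hC'
    have hC0 : C ≠ 0 := by
      rintro rfl
      simp at hs; omega
    have hCpos : 1 ≤ C.card := Multiset.card_pos.2 hC0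
    have h3 : k + A'.sum + 1 ≤ A'.card + 1 + C.card + k := by
      by_contra h
      obtain ⟨c, hc⟩ := Multiset.exists_mem_of_ne_zero hC0
      exact hP1 ⟨⟨c, hc, hC' c hc⟩, by omega⟩
    have hApos : 1 ≤ A'.card := by
      by_contra h0
      have : A' = 0 := Multiset.card_eq_zero.1 (by omega)
      subst this
      simp only [Multiset.sum_zero, Multiset.card_zero] at *
      nlinarith
    have hd : 2 * k ≤ k + A'.sum := by nlinarith
    have hk2 : k ≤ 2 := by
      by_contra hk3
      generalize k + A'.sum = d at *
      generalize A'.card + 1 = r at *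
      generalize C.card = s at *
      rw [← hs] at lC'
      have f1 : k * (k + 1) * (r + s) ≤ (2 * k + 1) * d := by nlinarith
      have f2 : k * (k + 1) * (d + 1) ≤ k * (k + 1) * (r + s + k) :=
        Nat.mul_le_mul_left _ h3
      obtain ⟨e, rfl⟩ : ∃ e, k = e + 3 := ⟨k - 3, by omega⟩
      nlinarith
    have hk2' : k = 2 := by
      by_contra h
      have : k = 1 := by omega
      subst this
      omega
    subst hk2'
    have hcases : (A'.card = 1 ∧ C.card = 1 ∧ A'.sum = 2) ∨
        (A'.card = 2 ∧ C.card = 2 ∧ A'.sum = 4) := by omega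
    rcases hcases with ⟨h4, h5, h6⟩ | ⟨h4, h5, h6⟩
    · have e1 := ms_eq hA' (by omega)
      rw [h4] at e1
      obtain ⟨c, rfl⟩ := Multiset.card_eq_one.1 h5
      rw [Multiset.sum_singleton] at hs
      have : c = 4 := by omega
      subst this
      subst e1
      exact base4 (by omega)
    · have e1 := ms_eq hA' (by omega)
      have e2 := ms_eq hC' (by omega)
      rw [h4] at e1
      rw [h5] at e2
      subst e1
      subst e2
      exact base6 (by omega)

lemma genus1 (N : ℕ) : IH X N := by
  induction N with
  | zero => intro A C h; omega
  | succ N ih =>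
    intro A C hN hA hC hs hrs hX
    have hne : (A + C).toFinset.Nonempty := by
      rw [Multiset.toFinset_nonempty]
      intro h
      have : A = 0 := (add_eq_zero.1 h).1
      subst this
      simp at hrs
    obtain ⟨k, hk, hmin⟩ := Finset.exists_min_image _ id hne
    simp only [Multiset.mem_toFinset, Multiset.mem_add, id] at hk hmin
    have hk1 : 1 ≤ k := by
      rcases hk with h | h
      · exact hA _ h
      · exact hC _ h
    rcases hk with h | h
    · exact step ih A C (by omega) k hk1 h (fun a ha => hmin a (Or.inl ha))
        (fun a ha => hmin a (Or.inr ha)) hs hrs hX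
    · obtain ⟨w, hw⟩ := step ih C A (by omega) k hk1 h (fun a ha => hmin a (Or.inr ha))
        (fun a ha => hmin a (Or.inl ha)) hs.symm (by omega) (by omega)
      refine ⟨w, ?_⟩
      rw [add_comm A.card]
      exact hw.symm hs.symm

lemma Ex.weaken {A C : Multiset ℕ} {M : ℕ} {t : Prop} {W : Set X} (h : Ex A C M t W) :
    Ex (X := X) A C M t ∅ := by
  obtain ⟨D, α, β, h⟩ := h
  exact ⟨D, α, β, ⟨h.hα, h.hβ, h.tA, h.tC, h.hcyc, h.hM, h.hT, fun w hw => hw.elim, h.hD⟩⟩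

lemma Ex.forget {A C : Multiset ℕ} {M : ℕ} {t : Prop} {W : Set X} (h : Ex A C M t W) :
    Ex (X := X) A C M False W := by
  obtain ⟨D, α, β, h⟩ := h
  exact ⟨D, α, β, ⟨h.hα, h.hβ, h.tA, h.tC, h.hcyc, h.hM, fun w => w.elim, h.hW, h.hD⟩⟩

lemma base2 (h : 2 ≤ Fintype.card X) : Ex (X := X) {1, 1} {2} 2 True ∅ := by
  have e : ty Finset.univ (Equiv.addRight (1 : Fin 2)) = {2} := by
    rw [ty_fin]; decide
  have e' : ty Finset.univ (1 : Perm (Fin 2)) = {1, 1} := by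
    rw [ty_fin]; decide
  have := base_embed (1 : Perm (Fin 2)) (Equiv.addRight (1 : Fin 2)) h 0 (by decide)
    (by
      have : ∀ b : Fin 2, ∃ i : Fin 2,
        ((1 * Equiv.addRight (1 : Fin 2) : Perm (Fin 2)))^[(i : ℕ)] 0 = b := by
        decide
      intro b
      obtain ⟨i, hi⟩ := this b
      rw [Perm.iterate_eq_pow] at hi
      exact ⟨i, by simpa using hi⟩) (by rw [e']; rfl)
  rw [e, e'] at this
  obtain ⟨w, hw⟩ := this
  exact hw.weaken

/-- Grow simultaneously a part of `A` and the unique part of `C`. -/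
lemma grow1 {a c : ℕ} {A : Multiset ℕ} {M : ℕ} {t : Prop} (j : ℕ)
    (h : Ex (X := X) (a ::ₘ A) {c} M t ∅)
    (hX : a + A.sum + j ≤ Fintype.card X) : Ex (X := X) ((a + j) ::ₘ A) {c + j} M t ∅ := by
  obtain ⟨D, α, β, h⟩ := h
  obtain ⟨x, hx, hc⟩ := mem_ty (D := D) (σ := α) (c := a) (by rw [h.tA]; simp)
  have hD := h.hD
  rw [Multiset.sum_cons] at hD
  exact E1s (C := 0) j D α β a c x h hx hc (card_cyc_of_singleton h.tC hx) (by simp) (by omega)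

lemma join (b₁ b₂ : ℕ) (h1 : 1 ≤ b₁) (h2 : 1 ≤ b₂) (B₁ B₂ : Multiset ℕ)
    (hB₁ : ∀ b ∈ B₁, 1 ≤ b) (hB₂ : ∀ b ∈ B₂, 1 ≤ b)
    (hX : b₁ + b₂ + B₁.sum + B₂.sum ≤ Fintype.card X) :
    Ex (X := X) (B₂ + (B₁ + {b₁, b₂})) (B₂ + {b₁ + b₂ + B₁.sum}) (B₁.card + 2) False ∅ := by
  have key : ∀ B₁ : Multiset ℕ, (∀ b ∈ B₁, 1 ≤ b) → b₁ + b₂ + B₁.sum ≤ Fintype.card X →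
      Ex (X := X) (B₁ + {b₁, b₂}) {b₁ + b₂ + B₁.sum} (B₁.card + 2) True ∅ := by
    intro B₁
    induction B₁ using Multiset.induction with
    | empty =>
      intro _ hX
      simp only [Multiset.sum_zero] at hX
      have g0 : Ex (X := X) (1 ::ₘ {1}) {2} 2 True ∅ := base2 (by omega)
      have g1 := grow1 (b₁ - 1) g0 (by simp; omega)
      rw [show 1 + (b₁ - 1) = b₁ by omega] at g1
      have g2 : Ex (X := X) (1 ::ₘ {b₁}) {2 + (b₁ - 1)} 2 True ∅ := by
        convert g1 using 1
        exact Multiset.cons_swap _ _ 0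
      have g3 := grow1 (b₂ - 1) g2 (by simp; omega)
      rw [show 1 + (b₂ - 1) = b₂ by omega] at g3
      convert g3 using 1
      · rw [zero_add]; exact Multiset.cons_swap _ _ 0
      · simp; omega
      · simp
    | cons b B ih =>
      intro hB hX
      rw [Multiset.sum_cons] at hX
      have h0 := ih (fun x hx => hB x (Multiset.mem_cons_of_mem hx)) (by omega)
      have := P1 (C := 0) h0 (hB b (Multiset.mem_cons_self _ _)) (by simp; omega)
      convert this using 1
      · rw [Multiset.cons_add]
      · simp; omega
      · simp
  induction B₂ using Multiset.induction with
  | empty =>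
    simp only [Multiset.sum_zero, zero_add] at *
    exact (key B₁ hB₁ hX).forget
  | cons b B ih =>
    rw [Multiset.sum_cons] at hX
    have h0 := ih (fun x hx => hB₂ x (Multiset.mem_cons_of_mem hx)) (by omega)
    have := P0 h0 (hB₂ b (Multiset.mem_cons_self _ _)) (by simp only [Multiset.sum_add, Multiset.insert_eq_cons, Multiset.sum_cons, Multiset.sum_singleton]; omega)
    rw [Multiset.cons_add, Multiset.cons_add]
    exact this

lemma case0 (a : ℕ) (ha : 2 ≤ a) (A : Multiset ℕ) (hA : ∀ b ∈ A, 1 ≤ b)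
    (hX : a + A.sum ≤ Fintype.card X) :
    Ex (X := X) (A + {a}) ((a + A.sum - 1) ::ₘ {1}) (A.card + 2) True ∅ := by
  induction A using Multiset.induction with
  | empty =>
    simp only [Multiset.sum_zero] at hX
    obtain ⟨D, α, β, h⟩ := (base2 (X := X) (by omega)).symm (by rfl)
    have hD : D.card = 2 := h.hD
    obtain ⟨x, hx⟩ : D.Nonempty := Finset.card_pos.1 (by omega)
    have hc : (cyc β x).card = 1 := by
      have h2 : (cyc β x).card ∈ ty D β := by rw [ty_eq hx]; simp
      rw [h.tC] at h2
      simpa using h2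
    have := E1s (A := 0) (C := {1}) (a - 2) D α β 2 1 x h hx (card_cyc_of_singleton h.tA hx)
      hc (by simp) (by omega)
    rw [show 2 + (a - 2) = a by omega, show 1 + (a - 2) = a - 1 by omega] at this
    simpa [Ex] using this
  | cons b B ih =>
    rw [Multiset.sum_cons] at hX
    have h0 := ih (fun x hx => hA x (Multiset.mem_cons_of_mem hx)) (by omega)
    have := P1 h0 (hA b (Multiset.mem_cons_self _ _)) (by simp; omega)
    convert this using 1
    · rw [Multiset.cons_add]
    · rw [Multiset.sum_cons]; congr 1; omega
    · rw [Multiset.card_cons]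
end genus
section final

lemma Ex.full {d : ℕ} {A C : Multiset ℕ} {M : ℕ} {t : Prop} {W : Set (Fin d)}
    (h : Ex A C M t W) (hA : A.sum = d) : ∃ α β : Perm (Fin d), G Finset.univ α β A C M t W := by
  obtain ⟨D, α, β, h⟩ := h
  have : D = Finset.univ := by
    rw [← Finset.card_eq_iff_eq_univ, h.hD, hA, Fintype.card_fin]
  subst this
  exact ⟨α, β, h⟩

lemma combine {d : ℕ} {A B C : Multiset ℕ} {M₁ M₂ : ℕ} {t : Prop}
    (h1 : Ex (X := Fin d) A C M₁ True ∅) (h2 : Ex (X := Fin d) B C M₂ t ∅)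
    (hA : A.sum = d) (hB : B.sum = d) :
    ∃ α α' γ γ' : Perm (Fin d), α * α'⁻¹ = γ * γ'⁻¹ ∧
      fullCycleType α = A ∧ fullCycleType α' = B ∧
      γ.IsCycle ∧ γ.support.card = M₁ ∧ γ'.IsCycle ∧ γ'.support.card = M₂ ∧
      ∀ x y, ∃ π ∈ Subgroup.closure ({α, γ} : Set (Perm (Fin d))), π x = y := by
  obtain ⟨α, β, h1⟩ := h1.full hA
  obtain ⟨α₂, β₂, h2⟩ := h2.full hB
  obtain ⟨π, hπ⟩ := conj_of_ty (σ := β₂) (τ := β) (by rw [h1.tC, h2.tC])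
  have hconj : π * α₂ * π⁻¹ * β = π * (α₂ * β₂) * π⁻¹ := by
    rw [← hπ]; group
  have hu : (Finset.univ : Finset (Fin d)).image π = Finset.univ :=
    Finset.image_univ_of_surjective π.surjective
  refine ⟨α, π * α₂ * π⁻¹, α * β, π * α₂ * π⁻¹ * β, by group, ?_, ?_, h1.hcyc, h1.hM, ?_, ?_, ?_⟩
  · rw [← ty_univ, h1.tA]
  · rw [← ty_univ, ← hu, ty_conj, h2.tA]
  · rw [hconj]; exact h2.hcyc.conj
  · rw [hconj, card_support_conj, h2.hM]
  · set H := Subgroup.closure ({α, α * β} : Set (Perm (Fin d))) with hH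
    have m1 : α ∈ H := Subgroup.subset_closure (by simp)
    have m2 : α * β ∈ H := Subgroup.subset_closure (by simp)
    have m3 : β ∈ H := by
      have := H.mul_mem (H.inv_mem m1) m2
      simpa using this
    intro x y
    obtain ⟨x', hx', i, hi⟩ := h1.hT trivial x (Finset.mem_univ _)
    obtain ⟨y', hy', j, hj⟩ := h1.hT trivial y (Finset.mem_univ _)
    obtain ⟨l, hl⟩ := h1.hcyc.sameCycle hx' hy'
    refine ⟨(β ^ j)⁻¹ * (α * β) ^ l * β ^ i, ?_, ?_⟩
    · exact H.mul_mem (H.mul_mem (H.inv_mem (H.zpow_mem m3 _)) (H.zpow_mem m2 _))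
        (H.zpow_mem m3 _)
    · rw [Perm.mul_apply, Perm.mul_apply, hi, hl, Perm.inv_eq_iff_eq, hj]

lemma fct_inv {d : ℕ} (σ : Perm (Fin d)) : fullCycleType σ⁻¹ = fullCycleType σ := by
  rw [← ty_univ, ← ty_univ, ty_inv]

lemma split (B : Multiset ℕ) (m : ℕ) (hm : 1 ≤ m) (h : m + 1 ≤ B.card) :
    ∃ b₁ b₂ B₁ B₂, B = B₂ + (B₁ + {b₁, b₂}) ∧ B₁.card + 2 = m + 1 := by
  obtain ⟨l, rfl⟩ := Quot.exists_rep B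
  match l, h with
  | [], h => simp at h
  | [x], h => simp at h; omega
  | b₁ :: b₂ :: l, h =>
    simp at h
    refine ⟨b₁, b₂, (l.take (m - 1) : Multiset ℕ), (l.drop (m - 1) : Multiset ℕ), ?_, ?_⟩
    · have e : (l : Multiset ℕ) = (l.drop (m - 1) : Multiset ℕ) + (l.take (m - 1) : Multiset ℕ) := by
        rw [add_comm, Multiset.coe_add, List.take_append_drop]
      rw [← add_assoc, ← e]
      change (b₁ ::ₘ b₂ ::ₘ (l : Multiset ℕ)) = _
      rw [add_comm]; rfl
    · simp; omega

/-- The multiset version in the case `m₁ ≥ p`. -/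
lemma main {d : ℕ} (A B : Multiset ℕ) (m₁ m₂ : ℕ) (hm₂ : 0 < m₂)
    (hA : ∀ a ∈ A, 1 ≤ a) (hB : ∀ b ∈ B, 1 ≤ b) (hsA : A.sum = d) (hsB : B.sum = d)
    (hsm : m₁ + m₂ = A.card + B.card) (h1 : m₁ + 1 ≤ d) (h2 : m₂ + 1 ≤ d)
    (hle : A.card ≤ m₁) :
    ∃ α α' γ γ' : Perm (Fin d), α * α'⁻¹ = γ * γ'⁻¹ ∧
      fullCycleType α = A ∧ fullCycleType α' = B ∧
      γ.IsCycle ∧ γ.support.card = m₁ + 1 ∧ γ'.IsCycle ∧ γ'.support.card = m₂ + 1 ∧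
      ∀ x y, ∃ π ∈ Subgroup.closure ({α, γ} : Set (Perm (Fin d))), π x = y := by
  rcases Nat.eq_or_lt_of_le hle with heq | hlt
  · have key : ∀ A : Multiset ℕ, (∀ a ∈ A, 1 ≤ a) → A.sum = d → A.card + 1 ≤ d →
        Ex (X := Fin d) A ((d - 1) ::ₘ {1}) (A.card + 1) True ∅ := by
      intro A hA hs hc
      obtain ⟨a, ha, ha2⟩ : ∃ a ∈ A, 2 ≤ a := by
        by_contra! hcon
        have e : A = Multiset.replicate A.card 1 := by
          rw [Multiset.eq_replicate]
          refine ⟨rfl, fun b hb => ?_⟩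
          have := hA b hb
          have := hcon b hb
          omega
        rw [e] at hs
        simp at hs
        omega
      obtain ⟨A', rfl⟩ := Multiset.exists_cons_of_mem ha
      rw [Multiset.sum_cons] at hs
      have := case0 (X := Fin d) a ha2 A' (fun b hb => hA b (Multiset.mem_cons_of_mem hb))
        (by rw [Fintype.card_fin]; omega)
      rw [hs] at this
      convert this using 1
      · rw [add_comm]; rfl
      · rw [Multiset.card_cons]
    have e2 : m₂ = B.card := by omega
    subst e2
    subst heq
    exact combine (key A hA hsA h1) (key B hB hsB h2) hsA hsB
  · obtain ⟨b₁, b₂, B₁, B₂, rfl, hc⟩ := split B m₂ hm₂ (by omega)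
    simp only [Multiset.card_add, Multiset.insert_eq_cons, Multiset.card_cons,
      Multiset.card_singleton] at hsm
    simp only [Multiset.sum_add, Multiset.insert_eq_cons, Multiset.sum_cons,
      Multiset.sum_singleton] at hsB
    have hb1 := hB b₁ (by simp)
    have hb2 := hB b₂ (by simp)
    have hB₁ : ∀ b ∈ B₁, 1 ≤ b := fun b hb => hB b (by simp [hb])
    have hB₂ : ∀ b ∈ B₂, 1 ≤ b := fun b hb => hB b (by simp [hb])
    have j := join (X := Fin d) b₁ b₂ hb1 hb2 B₁ B₂ hB₁ hB₂ (by rw [Fintype.card_fin]; omega)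
    obtain ⟨w, g⟩ := genus1 (X := Fin d) _ A (B₂ + {b₁ + b₂ + B₁.sum}) (Nat.lt_succ_self _) hA
      (by
        intro c hc
        rw [Multiset.mem_add, Multiset.mem_singleton] at hc
        rcases hc with hc | rfl
        · exact hB₂ c hc
        · omega)
      (by rw [Multiset.sum_add, Multiset.sum_singleton]; omega)
      (by rw [Multiset.card_add, Multiset.card_singleton]; omega)
      (by rw [Fintype.card_fin]; omega)
    rw [hc] at j
    have e : A.card + (B₂ + {b₁ + b₂ + B₁.sum}).card + 1 = m₁ + 1 := by
      rw [Multiset.card_add, Multiset.card_singleton]; omega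
    rw [e] at g
    refine combine g.weaken j hsA ?_
    simp only [Multiset.sum_add, Multiset.insert_eq_cons, Multiset.sum_cons,
      Multiset.sum_singleton]
    omega
end final
end L24

/-- Lemma 2.4 (case `ℓ = 2`, `m₁ + m₂ = p + q` of Proposition 1.4):
for a positive integer `d`, partitions `(a₁,…,a_p)`, `(b₁,…,b_q)` of `d`
and positive integers `m₁, m₂` with `m₁ + m₂ = p + q`, `m₁ + 1 ≤ d` and
`m₂ + 1 ≤ d`, there exist permutations `τ₁, τ₂, σ₁, σ₂ ∈ S_d` with
`τ₁ τ₂ σ₁ σ₂ = id`, prescribed cycle types, `σᵢ` an `(mᵢ+1)`-cycle,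
generating a transitive subgroup. -/
theorem lem_2_4 (d p q m₁ m₂ : ℕ) (hd : 0 < d) (hp : 0 < p) (hq : 0 < q)
    (hm₁ : 0 < m₁) (hm₂ : 0 < m₂)
    (a : Fin p → ℕ) (b : Fin q → ℕ)
    (ha : ∀ i, 0 < a i) (hb : ∀ i, 0 < b i)
    (hsa : ∑ i, a i = d) (hsb : ∑ i, b i = d)
    (hsm : m₁ + m₂ = p + q)
    (hm₁d : m₁ + 1 ≤ d) (hm₂d : m₂ + 1 ≤ d) :
    ∃ (τ₁ τ₂ σ₁ σ₂ : Equiv.Perm (Fin d)),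
      τ₁ * τ₂ * σ₁ * σ₂ = 1 ∧
      fullCycleType τ₁ = Finset.univ.val.map a ∧
      fullCycleType τ₂ = Finset.univ.val.map b ∧
      σ₁.IsCycle ∧ σ₁.support.card = m₁ + 1 ∧
      σ₂.IsCycle ∧ σ₂.support.card = m₂ + 1 ∧
      (∀ x y : Fin d,
        ∃ π ∈ Subgroup.closure ({τ₁, τ₂, σ₁, σ₂} : Set (Equiv.Perm (Fin d))),
          π x = y) := by
  have hA : ∀ x ∈ Finset.univ.val.map a, 1 ≤ x := by
    intro x hx
    rw [Multiset.mem_map] at hx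
    obtain ⟨i, -, rfl⟩ := hx
    exact ha i
  have hB : ∀ x ∈ Finset.univ.val.map b, 1 ≤ x := by
    intro x hx
    rw [Multiset.mem_map] at hx
    obtain ⟨i, -, rfl⟩ := hx
    exact hb i
  have cA : (Finset.univ.val.map a).card = p := by simp
  have cB : (Finset.univ.val.map b).card = q := by simp
  rcases le_total p m₁ with hle | hle
  · obtain ⟨α, α', γ, γ', e, h1, h2, h3, h4, h5, h6, h7⟩ :=
      L24.main (Finset.univ.val.map a) (Finset.univ.val.map b) m₁ m₂ hm₂ hA hB hsa hsb
        (by rw [cA, cB, hsm]) hm₁d hm₂d (by rw [cA]; exact hle)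
    refine ⟨α, α'⁻¹, γ⁻¹, γ * γ' * γ⁻¹, ?_, h1, ?_, h3.inv, ?_, h5.conj, ?_, ?_⟩
    · rw [e]; group
    · rw [L24.fct_inv, h2]
    · rw [Equiv.Perm.support_inv, h4]
    · rw [Equiv.Perm.card_support_conj, h6]
    · intro x y
      obtain ⟨π, hπ, hxy⟩ := h7 x y
      refine ⟨π, ?_, hxy⟩
      revert hπ
      apply (Subgroup.closure_le _).2
      rintro g (rfl | rfl)
      · exact Subgroup.subset_closure (by simp)
      · rw [SetLike.mem_coe, ← Subgroup.inv_mem_iff]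
        exact Subgroup.subset_closure (by simp)
  · obtain ⟨α, α', γ, γ', e, h1, h2, h3, h4, h5, h6, h7⟩ :=
      L24.main (Finset.univ.val.map b) (Finset.univ.val.map a) m₂ m₁ hm₁ hB hA hsb hsa
        (by rw [cA, cB]; omega) hm₂d hm₁d (by rw [cB]; omega)
    refine ⟨α', α⁻¹, γ'⁻¹, γ' * γ * γ'⁻¹, ?_, h2, ?_, h5.inv, ?_, h3.conj, ?_, ?_⟩
    · have e' : α' * α⁻¹ = (α * α'⁻¹)⁻¹ := by group
      rw [e', e]; group
    · rw [L24.fct_inv, h1]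
    · rw [Equiv.Perm.support_inv, h6]
    · rw [Equiv.Perm.card_support_conj, h4]
    · intro x y
      obtain ⟨π, hπ, hxy⟩ := h7 x y
      refine ⟨π, ?_, hxy⟩
      revert hπ
      apply (Subgroup.closure_le _).2
      set S : Set (Equiv.Perm (Fin d)) := {α', α⁻¹, γ'⁻¹, γ' * γ * γ'⁻¹} with hS
      have m1 : γ'⁻¹ ∈ Subgroup.closure S := Subgroup.subset_closure (by simp [hS])
      have m2 : γ' * γ * γ'⁻¹ ∈ Subgroup.closure S := Subgroup.subset_closure (by simp [hS])
      rintro g (rfl | rfl)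
      · rw [SetLike.mem_coe, ← Subgroup.inv_mem_iff]
        exact Subgroup.subset_closure (by simp [hS])
      · have := mul_mem (mul_mem m1 m2) (inv_mem m1)
        rw [SetLike.mem_coe]
        convert this using 1
        group
end

section
/- Let d and g be positive integers. Suppose a : {1,...,p} → ℤ>0 and b : {1,...,q} → ℤ>0 are partitions of d (i.e. a₁ + ⋯ + a_p = d and b₁ + ⋯ + b_q = d), and m₁, m₂ are positive integers with m₁ + m₂ = p + q − 2 + 2g, m₁ + 1 ≤ d, and m₂ + 1 ≤ d. Then there exist permutations τ₁, τ₂, σ₁, σ₂ in the symmetric group S_d such that: (1) τ₁ τ₂ σ₁ σ₂ = id; (2) the cycle type of τ₁ (as a partition of d, counting each fixed point as a part equal to 1) is (a₁, …, a_p), the cycle type of τ₂ is (b₁, …, b_q), σ₁ is a single cycle of length m₁ + 1, and σ₂ is a single cycle of length m₂ + 1; (3) the subgroup of S_d generated by τ₁, τ₂, σ₁, σ₂ acts transitively on {1, 2, …, d}. -/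
open Equiv Equiv.Perm

section Framework

variable {α : Type} [DecidableEq α]

/-- `f` acts on the finite set `s` as a single cycle. -/
def Cyc (f : Perm α) (s : Finset α) : Prop :=
  (∀ x ∈ s, f x ∈ s) ∧
    ∀ P : α → Prop, (∀ x ∈ s, P x → P (f x)) → ∀ x ∈ s, ∀ y ∈ s, P x → P y

theorem maps_surj {f : Perm α} {s : Finset α} (h : ∀ x ∈ s, f x ∈ s) {y : α} (hy : y ∈ s) :
    ∃ x ∈ s, f x = y := by
  obtain ⟨x, hx, h⟩ := Finset.surj_on_of_inj_on_of_card_le (s := s) (t := s)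
    (fun a _ => f a) h (fun a b _ _ hab => f.injective hab) le_rfl y hy
  exact ⟨x, hx, h.symm⟩

theorem maps_iff {f : Perm α} {s : Finset α} (h : ∀ x ∈ s, f x ∈ s) {y : α} :
    f y ∈ s ↔ y ∈ s := by
  refine ⟨fun hy => ?_, h y⟩
  obtain ⟨x, hx, hxy⟩ := maps_surj h hy
  rwa [← f.injective hxy]

theorem maps_inv {f : Perm α} {s : Finset α} (h : ∀ x ∈ s, f x ∈ s) :
    ∀ x ∈ s, f⁻¹ x ∈ s := by
  intro y hy
  obtain ⟨x, hx, rfl⟩ := maps_surj h hy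
  simpa using hx

theorem Cyc.congr {f g : Perm α} {s : Finset α} (h : Cyc f s) (e : ∀ x ∈ s, g x = f x) :
    Cyc g s := by
  refine ⟨fun x hx => by rw [e x hx]; exact h.1 x hx, fun P hP => h.2 P fun x hx hp => ?_⟩
  rw [← e x hx]; exact hP x hx hp

theorem Cyc.inv {f : Perm α} {s : Finset α} (h : Cyc f s) : Cyc f⁻¹ s := by
  refine ⟨maps_inv h.1, fun P hP x hx y hy hp => ?_⟩
  by_contra hn
  refine h.2 (fun z => ¬ P z) (fun z hz hnz hc => hnz ?_) y hy x hx hn hp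
  simpa using hP (f z) (h.1 z hz) hc

theorem Cyc.conj {f : Perm α} {s : Finset α} (h : Cyc f s) (k : Perm α) :
    Cyc (k * f * k⁻¹) (s.image k) := by
  refine ⟨fun x hx => ?_, fun P hP x hx y hy hp => ?_⟩
  · obtain ⟨z, hz, rfl⟩ := Finset.mem_image.1 hx
    simpa using h.1 z hz
  · obtain ⟨z, hz, rfl⟩ := Finset.mem_image.1 hx
    obtain ⟨w, hw, rfl⟩ := Finset.mem_image.1 hy
    refine h.2 (fun z => P (k z)) (fun z hz hpz => ?_) z hz w hw hp
    simpa using hP (k z) (Finset.mem_image_of_mem _ hz) hpz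

theorem Cyc.single {f : Perm α} {x : α} (h : f x = x) : Cyc f {x} := by
  refine ⟨by simp [h], fun P _ => by simp⟩

/-- Merging two cycles by a transposition. -/
theorem Cyc.merge {f : Perm α} {s t : Finset α} (hs : Cyc f s) (ht : Cyc f t)
    (hd : Disjoint s t) {x y : α} (hx : x ∈ s) (hy : y ∈ t) :
    Cyc (swap x y * f) (s ∪ t) := by
  have gs : ∀ w ∈ s, f w ≠ x → (swap x y * f) w = f w := fun w hw hne => by
    rw [Perm.mul_apply, swap_apply_of_ne_of_ne hne]
    rintro rfl
    exact Finset.disjoint_left.1 hd (hs.1 w hw) hy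
  have gt : ∀ w ∈ t, f w ≠ y → (swap x y * f) w = f w := fun w hw hne => by
    rw [Perm.mul_apply, swap_apply_of_ne_of_ne _ hne]
    rintro rfl
    exact Finset.disjoint_left.1 hd hx (ht.1 w hw)
  have gx : ∀ w, f w = x → (swap x y * f) w = y := fun w hw => by simp [hw]
  have gy : ∀ w, f w = y → (swap x y * f) w = x := fun w hw => by simp [hw]
  refine ⟨fun w hw => ?_, fun P hP => ?_⟩
  · rcases Finset.mem_union.1 hw with hw | hw
    · by_cases h : f w = x
      · rw [gx w h]; exact Finset.mem_union_right _ hy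
      · rw [gs w hw h]; exact Finset.mem_union_left _ (hs.1 w hw)
    · by_cases h : f w = y
      · rw [gy w h]; exact Finset.mem_union_left _ hx
      · rw [gt w hw h]; exact Finset.mem_union_right _ (ht.1 w hw)
  · have hPs : ∀ w ∈ s, P w → P (f w) ∨ P y := fun w hw hp => by
      have := hP w (Finset.mem_union_left _ hw) hp
      by_cases h : f w = x
      · rw [gx w h] at this; exact Or.inr this
      · rw [gs w hw h] at this; exact Or.inl this
    have hPt : ∀ w ∈ t, P w → P (f w) ∨ P x := fun w hw hp => by
      have := hP w (Finset.mem_union_right _ hw) hp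
      by_cases h : f w = y
      · rw [gy w h] at this; exact Or.inr this
      · rw [gt w hw h] at this; exact Or.inl this
    have h1 : ∀ z ∈ s, P z → P y := fun z hz hp => by
      obtain ⟨e, he, hex⟩ := maps_surj hs.1 hx
      have := hs.2 (fun w => P w ∨ P y) (fun w hw h => h.elim (hPs w hw) Or.inr) z hz e he
        (Or.inl hp)
      rcases this with h | h
      · have := hP e (Finset.mem_union_left _ he) h
        rwa [gx e hex] at this
      · exact h
    have h2 : ∀ z ∈ t, P z → P x := fun z hz hp => by
      obtain ⟨e, he, hex⟩ := maps_surj ht.1 hy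
      have := ht.2 (fun w => P w ∨ P x) (fun w hw h => h.elim (hPt w hw) Or.inr) z hz e he
        (Or.inl hp)
      rcases this with h | h
      · have := hP e (Finset.mem_union_right _ he) h
        rwa [gy e hex] at this
      · exact h
    intro z hz w hw hp
    have hxy : P x ∧ P y := by
      rcases Finset.mem_union.1 hz with h | h
      · exact ⟨h2 y hy (h1 z h hp), h1 z h hp⟩
      · exact ⟨h2 z h hp, h1 x hx (h2 z h hp)⟩
    rcases Finset.mem_union.1 hw with h | h
    · refine hs.2 P (fun v hv hpv => ?_) x hx w h hxy.1
      by_cases hfx : f v = x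
      · rw [hfx]; exact hxy.1
      · have := hP v (Finset.mem_union_left _ hv) hpv
        rwa [gs v hv hfx] at this
    · refine ht.2 P (fun v hv hpv => ?_) y hy w h hxy.2
      by_cases hfx : f v = y
      · rw [hfx]; exact hxy.2
      · have := hP v (Finset.mem_union_right _ hv) hpv
        rwa [gt v hv hfx] at this

/-- Inserting a fixed point into a cycle. -/
theorem Cyc.insert {f : Perm α} {s : Finset α} (hs : Cyc f s) {x y : α} (hx : x ∈ s)
    (hy : y ∉ s) (hf : f y = y) : Cyc (swap x y * f) (insert y s) := by
  have := hs.merge (Cyc.single hf) (by simpa using hy) hx (Finset.mem_singleton_self y)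
  rwa [Finset.union_comm, ← Finset.insert_eq] at this

theorem exists_cyc (s : Finset α) : ∃ f : Perm α, Cyc f s ∧ ∀ x ∉ s, f x = x := by
  induction s using Finset.induction_on with
  | empty => exact ⟨1, ⟨by simp, by simp⟩, by simp⟩
  | insert a s ha ih =>
    obtain ⟨f, hf, hfix⟩ := ih
    rcases s.eq_empty_or_nonempty with rfl | ⟨b, hb⟩
    · exact ⟨1, Cyc.single (by simp), by simp⟩
    · refine ⟨swap b a * f, hf.insert hb ha (hfix a ha), fun x hx => ?_⟩
      rw [Finset.mem_insert, not_or] at hx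
      rw [Perm.mul_apply, hfix x hx.2, swap_apply_of_ne_of_ne _ hx.1]
      rintro rfl; exact hx.2 hb

/-- `CT f U a`: the set `U` is a disjoint union of cycles of `f` whose sizes form `a`. -/
inductive CT (f : Perm α) : Finset α → Multiset ℕ → Prop
  | nil : CT f ∅ 0
  | cons (s U : Finset α) (a : Multiset ℕ) (n : ℕ) (hs : Cyc f s) (hne : s.Nonempty)
      (hd : Disjoint s U) (hn : s.card = n) (h : CT f U a) : CT f (s ∪ U) (n ::ₘ a)

theorem CT.maps {f : Perm α} {U : Finset α} {a : Multiset ℕ} (h : CT f U a) :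
    ∀ x ∈ U, f x ∈ U := by
  induction h with
  | nil => simp
  | cons s U a n hs hne hd hn h ih =>
    intro x hx
    rcases Finset.mem_union.1 hx with hx | hx
    · exact Finset.mem_union_left _ (hs.1 x hx)
    · exact Finset.mem_union_right _ (ih x hx)

theorem CT.card {f : Perm α} {U : Finset α} {a : Multiset ℕ} (h : CT f U a) :
    U.card = a.sum := by
  induction h with
  | nil => simp
  | cons s U a n hs hne hd hn h ih =>
    rw [Finset.card_union_of_disjoint hd, ih, hn, Multiset.sum_cons]

theorem CT.congr {f g : Perm α} {U : Finset α} {a : Multiset ℕ} (h : CT f U a)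
    (e : ∀ x ∈ U, g x = f x) : CT g U a := by
  induction h with
  | nil => exact CT.nil
  | cons s U a n hs hne hd hn h ih =>
    exact CT.cons s U a n (hs.congr fun x hx => e x (Finset.mem_union_left _ hx)) hne hd hn
      (ih fun x hx => e x (Finset.mem_union_right _ hx))

theorem CT.inv {f : Perm α} {U : Finset α} {a : Multiset ℕ} (h : CT f U a) : CT f⁻¹ U a := by
  induction h with
  | nil => exact CT.nil
  | cons s U a n hs hne hd hn h ih => exact CT.cons s U a n hs.inv hne hd hn ih

theorem CT.conj {f : Perm α} {U : Finset α} {a : Multiset ℕ} (h : CT f U a) (k : Perm α) :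
    CT (k * f * k⁻¹) (U.image k) a := by
  induction h with
  | nil => exact CT.nil
  | cons s U a n hs hne hd hn h ih =>
    rw [Finset.image_union]
    refine CT.cons _ _ a n (hs.conj k) (hne.image _) ?_ ?_ ih
    · exact (Finset.disjoint_image k.injective).2 hd
    · rw [Finset.card_image_of_injective _ k.injective, hn]

theorem CT.extract {f : Perm α} {U : Finset α} {x : ℕ} {a : Multiset ℕ} (h : CT f U (x ::ₘ a)) :
    ∃ s V, U = s ∪ V ∧ Disjoint s V ∧ Cyc f s ∧ s.Nonempty ∧ s.card = x ∧ CT f V a := by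
  generalize hb : x ::ₘ a = b at h
  induction h generalizing a with
  | nil => simp at hb
  | cons s U c n hs hne hd hn h ih =>
    rcases Multiset.cons_eq_cons.1 hb with ⟨rfl, rfl⟩ | ⟨_, e, rfl, rfl⟩
    · exact ⟨s, U, rfl, hd, hs, hne, hn, h⟩
    · obtain ⟨t, V, rfl, hd', ht, hne', hc, hV⟩ := ih rfl
      rw [Finset.disjoint_union_right] at hd
      refine ⟨t, s ∪ V, Finset.union_left_comm _ _ _, ?_, ht, hne', hc,
        CT.cons s V e n hs hne hd.2 hn hV⟩
      rw [Finset.disjoint_union_right]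
      exact ⟨hd.1.symm, hd'⟩

theorem CT.single {f : Perm α} {s : Finset α} (hs : Cyc f s) (hne : s.Nonempty) {n : ℕ}
    (hn : s.card = n) : CT f s {n} := by
  have := CT.cons s ∅ 0 n hs hne (by simp) hn CT.nil
  simpa using this

theorem CT.cons' {f : Perm α} {s U W : Finset α} {a : Multiset ℕ} {n : ℕ} (hs : Cyc f s)
    (hne : s.Nonempty) (hd : Disjoint s U) (hn : s.card = n) (h : CT f U a) (hW : W = s ∪ U) :
    CT f W (n ::ₘ a) := hW ▸ CT.cons s U a n hs hne hd hn h

/-- Extension of a cycle inside a permutation with given cycle type. -/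
theorem CT.exists_of_sum (U : Finset α) (a : Multiset ℕ) (ha : ∀ x ∈ a, 0 < x)
    (h : U.card = a.sum) : ∃ f : Perm α, CT f U a ∧ ∀ x ∉ U, f x = x := by
  induction a using Multiset.induction_on generalizing U with
  | empty =>
    have : U = ∅ := by simpa using h
    subst this
    exact ⟨1, CT.nil, by simp⟩
  | cons n a ih =>
    rw [Multiset.sum_cons] at h
    obtain ⟨s, hsU, hs⟩ := Finset.exists_subset_card_eq (s := U) (n := n) (by omega)
    obtain ⟨f, hf, hfix⟩ := ih (U \ s) (fun x hx => ha x (Multiset.mem_cons_of_mem hx))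
      (by rw [Finset.card_sdiff_of_subset hsU]; omega)
    obtain ⟨γ, hγ, hγfix⟩ := exists_cyc s
    refine ⟨f * γ, CT.cons' (s := s) (U := U \ s) ?_ ?_ Finset.disjoint_sdiff hs
      (hf.congr ?_) (Finset.union_sdiff_of_subset hsU).symm, fun x hx => ?_⟩
    · refine hγ.congr fun x hx => ?_
      rw [Perm.mul_apply, hfix]
      simp [hγ.1 x hx]
    · rw [← Finset.card_pos, hs]; exact ha n (Multiset.mem_cons_self _ _)
    · intro x hx
      rw [Perm.mul_apply, hγfix x (by simp at hx; exact hx.2)]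
    · rw [Perm.mul_apply, hγfix x (fun h => hx (hsU h)), hfix x (by simp [hx])]

end Framework

section Ops

/-- A configuration: `τ₁ τ₂` is a cycle on `S`, cycle types `a`, `b` on `U`, connected. -/
structure Cfg (t₁ t₂ : Perm ℕ) (U S : Finset ℕ) (a b : Multiset ℕ) (m : ℕ) : Prop where
  ct₁ : CT t₁ U a
  ct₂ : CT t₂ U b
  fix₁ : ∀ x ∉ U, t₁ x = x
  fix₂ : ∀ x ∉ U, t₂ x = x
  sub : S ⊆ U
  card : S.card = m + 1
  cyc : Cyc (t₁ * t₂) S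
  fixc : ∀ x ∉ S, (t₁ * t₂) x = x
  conn : ∀ P : ℕ → Prop, (∀ x ∈ U, P (t₁ x) ↔ P x) → (∀ x ∈ U, P (t₂ x) ↔ P x) →
    ∀ x ∈ U, ∀ y ∈ U, P x → P y

def Good (a b : Multiset ℕ) (m : ℕ) : Prop := ∃ t₁ t₂ U S, Cfg t₁ t₂ U S a b m

/-- A good configuration with two consecutive points of a cycle of `τ₂` in `S`. -/
def GoodW (a b : Multiset ℕ) (m : ℕ) : Prop :=
  ∃ t₁ t₂ U S, Cfg t₁ t₂ U S a b m ∧ ∃ w ∈ S, t₂ w ∈ S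

theorem GoodW.good {a b m} (h : GoodW a b m) : Good a b m := by
  obtain ⟨t₁, t₂, U, S, h, -⟩ := h
  exact ⟨t₁, t₂, U, S, h⟩

theorem Cfg.symm {t₁ t₂ U S a b m} (h : Cfg t₁ t₂ U S a b m) :
    Cfg t₂⁻¹ t₁⁻¹ U S b a m where
  ct₁ := h.ct₂.inv
  ct₂ := h.ct₁.inv
  fix₁ x hx := by rw [Perm.inv_eq_iff_eq, h.fix₂ x hx]
  fix₂ x hx := by rw [Perm.inv_eq_iff_eq, h.fix₁ x hx]
  sub := h.sub
  card := h.card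
  cyc := by rw [← mul_inv_rev]; exact h.cyc.inv
  fixc x hx := by rw [← mul_inv_rev, Perm.inv_eq_iff_eq, h.fixc x hx]
  conn P h₁ h₂ := by
    refine h.conn P (fun x hx => ?_) (fun x hx => ?_)
    · have := h₂ _ (h.ct₁.maps x hx)
      rw [← this]; simp
    · have := h₁ _ (h.ct₂.maps x hx)
      rw [← this]; simp

theorem Good.symm {a b m} (h : Good a b m) : Good b a m := by
  obtain ⟨t₁, t₂, U, S, h⟩ := h
  exact ⟨_, _, _, _, h.symm⟩

theorem Cfg.meet₂ {t₁ t₂ U S a b m} (h : Cfg t₁ t₂ U S a b m) {s : Finset ℕ} (hs : Cyc t₂ s)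
    (hne : s.Nonempty) (hsU : s ⊆ U) : ∃ x ∈ s, x ∈ S := by
  by_contra hc
  push Not at hc
  have key := h.conn (fun x => x ∈ s) (fun x _ => ?_) (fun x _ => maps_iff hs.1)
  · obtain ⟨z, hz⟩ := hne
    obtain ⟨y, hy⟩ : S.Nonempty := by rw [← Finset.card_pos, h.card]; omega
    exact hc y (key z (hsU hz) y (h.sub hy) hz) hy
  · constructor
    · intro hx
      have h1 := h.fixc _ (hc _ hx)
      rw [Perm.mul_apply] at h1
      have h2 := t₁.injective h1
      rw [← h2]; exact hs.1 _ hx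
    · intro hx
      obtain ⟨z, hz, rfl⟩ := maps_surj hs.1 hx
      have h1 := h.fixc _ (hc _ hz)
      rw [Perm.mul_apply] at h1
      rwa [h1]

theorem Cfg.meet₁ {t₁ t₂ U S a b m} (h : Cfg t₁ t₂ U S a b m) {s : Finset ℕ} (hs : Cyc t₁ s)
    (hne : s.Nonempty) (hsU : s ⊆ U) : ∃ x ∈ s, x ∈ S :=
  h.symm.meet₂ hs.inv hne hsU

theorem Cyc.const {f : Perm ℕ} {s : Finset ℕ} (h : Cyc f s) {P : ℕ → Prop}
    (hP : ∀ x ∈ s, P (f x) ↔ P x) {x y : ℕ} (hx : x ∈ s) (hy : y ∈ s) : P x ↔ P y :=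
  ⟨h.2 P (fun z hz => (hP z hz).2) x hx y hy, h.2 P (fun z hz => (hP z hz).2) y hy x hx⟩

/-- If the product is a full cycle the connectedness is automatic. -/
theorem conn_of_full {t₁ t₂ : Perm ℕ} {U : Finset ℕ} (hm : ∀ x ∈ U, t₂ x ∈ U)
    (h : Cyc (t₁ * t₂) U) : ∀ P : ℕ → Prop, (∀ x ∈ U, P (t₁ x) ↔ P x) →
    (∀ x ∈ U, P (t₂ x) ↔ P x) → ∀ x ∈ U, ∀ y ∈ U, P x → P y := by
  intro P h₁ h₂ x hx y hy
  refine (h.const (fun z hz => ?_) hx hy).1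
  rw [Perm.mul_apply, h₁ _ (hm z hz), h₂ z hz]

theorem fresh (U : Finset ℕ) (n : ℕ) : ∃ T : Finset ℕ, Disjoint U T ∧ T.card = n := by
  obtain ⟨T, hT, hc⟩ := Infinite.exists_superset_card_eq U (U.card + n) (by omega)
  refine ⟨T \ U, Finset.disjoint_sdiff, ?_⟩
  rw [Finset.card_sdiff_of_subset hT]; omega

theorem good_base {x : ℕ} (hx : 0 < x) : Good {x} {x} 0 := by
  obtain ⟨T, -, hT⟩ := fresh ∅ x
  obtain ⟨γ, hγ, hfix⟩ := exists_cyc T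
  have hne : T.Nonempty := by rw [← Finset.card_pos]; omega
  obtain ⟨n, hn⟩ := hne
  refine ⟨γ, γ⁻¹, T, {n}, CT.single hγ ⟨n, hn⟩ hT, CT.single hγ.inv ⟨n, hn⟩ hT, hfix,
    fun x hx => ?_, by simpa using hn, by simp, Cyc.single (by simp), by simp, ?_⟩
  · rw [Perm.inv_eq_iff_eq, hfix x hx]
  · intro P h₁ _ x hx y hy
    exact (hγ.const h₁ hx hy).1

/-- Operation 1. -/
theorem Good.op1 {x : ℕ} {a b : Multiset ℕ} {m : ℕ} (h : Good (x ::ₘ a) b m) {n : ℕ}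
    (hn : 0 < n) : Good ((x + n) ::ₘ a) (n ::ₘ b) (m + 1) := by
  obtain ⟨t₁, t₂, U, S, h⟩ := h
  obtain ⟨s, V, hU, hsV, hs, hne, hc, hV⟩ := h.ct₁.extract
  have hsU : s ⊆ U := hU ▸ Finset.subset_union_left
  have hVU : V ⊆ U := hU ▸ Finset.subset_union_right
  obtain ⟨u, hus, huS⟩ := h.meet₁ hs hne hsU
  obtain ⟨T, hUT, hT⟩ := fresh U n
  obtain ⟨γ, hγ, hγfix⟩ := exists_cyc T
  have hTne : T.Nonempty := by rw [← Finset.card_pos]; omega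
  obtain ⟨v, hv⟩ := hTne
  have hUT' := Finset.disjoint_left.1 hUT
  have hTU : ∀ x ∈ T, x ∉ U := fun x hx hx' => hUT' hx' hx
  have hsT : Disjoint s T := Finset.disjoint_of_subset_left hsU hUT
  have hγi : ∀ x ∉ T, γ⁻¹ x = x := fun x hx => by rw [Perm.inv_eq_iff_eq, hγfix x hx]
  have c1 : Cyc (t₁ * γ) s := hs.congr fun x hx => by
    rw [Perm.mul_apply, hγfix x (hUT' (hsU hx))]
  have c2 : Cyc (t₁ * γ) T := hγ.congr fun x hx => by
    rw [Perm.mul_apply, h.fix₁ _ (hTU _ (hγ.1 x hx))]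
  have c3 : Cyc (swap u v * (t₁ * γ)) (s ∪ T) := c1.merge c2 hsT hus hv
  have e1 : ∀ x ∈ V, (swap u v * (t₁ * γ)) x = t₁ x := fun x hx => by
    rw [Perm.mul_apply, Perm.mul_apply, hγfix x (hUT' (hVU hx)), swap_apply_of_ne_of_ne]
    · rintro rfl; exact Finset.disjoint_left.1 hsV hus (hV.maps x hx)
    · rintro rfl; exact hTU _ hv (hVU (hV.maps x hx))
  have e2 : ∀ x ∈ U, (γ⁻¹ * t₂) x = t₂ x := fun x hx => by
    rw [Perm.mul_apply, hγi _ (hUT' (h.ct₂.maps x hx))]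
  have e3 : ∀ x ∈ T, (γ⁻¹ * t₂) x = γ⁻¹ x := fun x hx => by
    rw [Perm.mul_apply, h.fix₂ _ (hTU _ hx)]
  have c4 : Cyc (γ⁻¹ * t₂) T := hγ.inv.congr e3
  have hprod : (swap u v * (t₁ * γ)) * (γ⁻¹ * t₂) = swap u v * (t₁ * t₂) := by group
  have hvS : v ∉ S := fun hh => hTU _ hv (h.sub hh)
  refine ⟨swap u v * (t₁ * γ), γ⁻¹ * t₂, U ∪ T, insert v S, ?_, ?_, ?_, ?_, ?_, ?_, ?_, ?_, ?_⟩
  · refine CT.cons' (s := s ∪ T) (U := V) c3 (hne.mono Finset.subset_union_left) ?_ ?_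
      (hV.congr e1) ?_
    · rw [Finset.disjoint_union_left]
      exact ⟨hsV, (Finset.disjoint_of_subset_left hVU hUT).symm⟩
    · rw [Finset.card_union_of_disjoint hsT, hc, hT]
    · rw [hU]; exact Finset.union_right_comm _ _ _
  · exact CT.cons' c4 ⟨v, hv⟩ hUT.symm hT (h.ct₂.congr e2) (Finset.union_comm _ _)
  · intro x hx
    rw [Finset.mem_union, not_or] at hx
    rw [Perm.mul_apply, Perm.mul_apply, hγfix x hx.2, h.fix₁ x hx.1, swap_apply_of_ne_of_ne]
    · rintro rfl; exact hx.1 (hsU hus)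
    · rintro rfl; exact hx.2 hv
  · intro x hx
    rw [Finset.mem_union, not_or] at hx
    rw [Perm.mul_apply, h.fix₂ x hx.1, hγi x hx.2]
  · exact Finset.insert_subset (Finset.mem_union_right _ hv)
      (h.sub.trans Finset.subset_union_left)
  · rw [Finset.card_insert_of_notMem hvS, h.card]
  · rw [hprod]; exact h.cyc.insert huS hvS (h.fixc v hvS)
  · intro x hx
    rw [Finset.mem_insert, not_or] at hx
    rw [hprod, Perm.mul_apply, h.fixc x hx.2, swap_apply_of_ne_of_ne _ hx.1]
    rintro rfl; exact hx.2 huS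
  · intro P h₁ h₂
    have hU1 : s ∪ T ⊆ U ∪ T := Finset.union_subset_union_left hsU
    have k1 : ∀ x ∈ s ∪ T, ∀ y ∈ s ∪ T, (P x ↔ P y) := fun x hx y hy =>
      c3.const (fun z hz => h₁ z (hU1 hz)) hx hy
    have k2 : ∀ x ∈ U, ∀ y ∈ U, P x → P y := h.conn P (fun x hx => by
        by_cases hxs : x ∈ s
        · exact k1 _ (Finset.mem_union_left _ (hs.1 x hxs)) _ (Finset.mem_union_left _ hxs)
        · have hxV : x ∈ V := by
            rw [hU] at hx; exact (Finset.mem_union.1 hx).resolve_left hxs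
          rw [← e1 x hxV]; exact h₁ x (Finset.mem_union_left _ hx))
      (fun x hx => by rw [← e2 x hx]; exact h₂ x (Finset.mem_union_left _ hx))
    have k3 : ∀ x ∈ U ∪ T, (P x ↔ P u) := fun x hx => by
      rcases Finset.mem_union.1 hx with hx | hx
      · exact ⟨k2 x hx u (hsU hus), k2 u (hsU hus) x hx⟩
      · exact k1 x (Finset.mem_union_right _ hx) u (Finset.mem_union_left _ hus)
    intro x hx y hy
    rw [k3 x hx, k3 y hy]; exact id

end Ops

section Ops2

/-- Insertion of two fresh points in a cycle. -/
theorem ins2 {t : Perm ℕ} {U s V : Finset ℕ} {x : ℕ} {a : Multiset ℕ}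
    (hU : U = s ∪ V) (hsV : Disjoint s V) (hs : Cyc t s) (hc : s.card = x) (hV : CT t V a)
    (hfix : ∀ x ∉ U, t x = x) {u n₁ n₂ : ℕ} (hu : u ∈ s) (h1 : n₁ ∉ U) (h2 : n₂ ∉ U)
    (h12 : n₁ ≠ n₂) :
    CT (swap u n₁ * (swap n₁ n₂ * t)) (U ∪ {n₁, n₂}) ((x + 2) ::ₘ a) ∧
    (∀ x ∉ U ∪ {n₁, n₂}, (swap u n₁ * (swap n₁ n₂ * t)) x = x) ∧
    (∀ P : ℕ → Prop, (∀ x ∈ U ∪ {n₁, n₂}, P ((swap u n₁ * (swap n₁ n₂ * t)) x) ↔ P x) →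
      (∀ x ∈ U, P (t x) ↔ P x) ∧ (P n₁ ↔ P u) ∧ (P n₂ ↔ P u)) := by
  have hsU : s ⊆ U := hU ▸ Finset.subset_union_left
  have hVU : V ⊆ U := hU ▸ Finset.subset_union_right
  have f1 := hfix n₁ h1
  have f2 := hfix n₂ h2
  have c1 : Cyc (swap n₁ n₂ * t) (insert n₂ {n₁}) :=
    (Cyc.single f1).insert (Finset.mem_singleton_self _) (by simpa using h12.symm) f2
  have e0 : ∀ x ∈ U, (swap n₁ n₂ * t) x = t x := fun x hx => by
    have : t x ∈ U := by
      by_contra hh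
      have := hfix _ hh
      rw [t.injective this] at hh
      exact hh hx
    rw [Perm.mul_apply, swap_apply_of_ne_of_ne]
    · rintro rfl; exact h1 this
    · rintro rfl; exact h2 this
  have c2 : Cyc (swap n₁ n₂ * t) s := hs.congr fun x hx => e0 x (hsU hx)
  have hdU : Disjoint U (insert n₂ {n₁}) := by
    rw [Finset.disjoint_right]; simp [h1, h2]
  have hd : Disjoint s (insert n₂ {n₁}) := Finset.disjoint_of_subset_left hsU hdU
  have c3 := c2.merge c1 hd hu (y := n₁) (by simp)
  rw [Finset.pair_comm n₂ n₁] at c3 hd hdU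
  have e1 : ∀ x ∈ V, (swap u n₁ * (swap n₁ n₂ * t)) x = t x := fun x hx => by
    rw [Perm.mul_apply, e0 x (hVU hx), swap_apply_of_ne_of_ne]
    · rintro rfl; exact Finset.disjoint_left.1 hsV hu (hV.maps x hx)
    · rintro rfl; exact h1 (hVU (hV.maps x hx))
  refine ⟨?_, ?_, ?_⟩
  · refine CT.cons' c3 ⟨u, Finset.mem_union_left _ hu⟩ ?_ ?_ (hV.congr e1) ?_
    · rw [Finset.disjoint_union_left]
      exact ⟨hsV, (Finset.disjoint_of_subset_left hVU hdU).symm⟩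
    · rw [Finset.card_union_of_disjoint hd, hc, Finset.card_pair h12]
    · rw [hU]; exact Finset.union_right_comm _ _ _
  · intro x hx
    simp only [Finset.mem_union, Finset.mem_insert, Finset.mem_singleton, not_or] at hx
    rw [Perm.mul_apply, Perm.mul_apply, hfix x hx.1, swap_apply_of_ne_of_ne hx.2.1 hx.2.2,
      swap_apply_of_ne_of_ne _ hx.2.1]
    rintro rfl; exact hx.1 (hsU hu)
  · intro P hP
    have hU1 : s ∪ {n₁, n₂} ⊆ U ∪ {n₁, n₂} := Finset.union_subset_union_left hsU
    have k1 : ∀ x ∈ s ∪ {n₁, n₂}, ∀ y ∈ s ∪ {n₁, n₂}, (P x ↔ P y) := fun x hx y hy =>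
      c3.const (fun z hz => hP z (hU1 hz)) hx hy
    refine ⟨fun x hx => ?_, k1 _ (by simp) _ (by simp [hu]), k1 _ (by simp) _ (by simp [hu])⟩
    by_cases hxs : x ∈ s
    · exact k1 _ (Finset.mem_union_left _ (hs.1 x hxs)) _ (Finset.mem_union_left _ hxs)
    · have hxV : x ∈ V := by
        rw [hU] at hx; exact (Finset.mem_union.1 hx).resolve_left hxs
      rw [← e1 x hxV]; exact hP x (Finset.mem_union_left _ hx)

theorem fresh2 (U : Finset ℕ) : ∃ n₁ n₂, n₁ ∉ U ∧ n₂ ∉ U ∧ n₁ ≠ n₂ := by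
  obtain ⟨n₁, h1⟩ := Infinite.exists_notMem_finset U
  obtain ⟨n₂, h2⟩ := Infinite.exists_notMem_finset (insert n₁ U)
  rw [Finset.mem_insert, not_or] at h2
  exact ⟨n₁, n₂, h1, h2.2, fun h => h2.1 h.symm⟩

/-- Insertion of two points in the big cycle. -/
theorem cyc_ins2 {c : Perm ℕ} {S : Finset ℕ} {m : ℕ} (hc : Cyc c S) (hfix : ∀ x ∉ S, c x = x)
    (hm : S.card = m + 1) {u v n₁ n₂ : ℕ} (hu : u ∈ S) (hv : v ∈ insert n₂ S)
    (h1 : n₁ ∉ S) (h2 : n₂ ∉ S) (h12 : n₁ ≠ n₂) :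
    Cyc (swap v n₁ * (swap u n₂ * c)) (S ∪ {n₁, n₂}) ∧
    (∀ x ∉ S ∪ {n₁, n₂}, (swap v n₁ * (swap u n₂ * c)) x = x) ∧
    (S ∪ {n₁, n₂}).card = m + 2 + 1 := by
  have c1 := hc.insert hu h2 (hfix n₂ h2)
  have h1' : n₁ ∉ insert n₂ S := by simp [h1, h12]
  have e1 : ∀ x ∉ insert n₂ S, (swap u n₂ * c) x = x := fun x hx => by
    rw [Finset.mem_insert, not_or] at hx
    rw [Perm.mul_apply, hfix x hx.2, swap_apply_of_ne_of_ne _ hx.1]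
    rintro rfl; exact hx.2 hu
  have c2 := c1.insert hv h1' (e1 n₁ h1')
  have hS : S ∪ {n₁, n₂} = insert n₁ (insert n₂ S) := by
    ext z; simp only [Finset.mem_union, Finset.mem_insert, Finset.mem_singleton]; tauto
  rw [hS]
  refine ⟨c2, fun x hx => ?_, ?_⟩
  · rw [Finset.mem_insert, not_or] at hx
    rw [Perm.mul_apply, e1 x hx.2, swap_apply_of_ne_of_ne _ hx.1]
    rintro rfl; exact hx.2 hv
  · rw [Finset.card_insert_of_notMem h1', Finset.card_insert_of_notMem h2, hm]

/-- Operation 2. -/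
theorem Good.op2 {x y : ℕ} {a b : Multiset ℕ} {m : ℕ} (h : Good (x ::ₘ a) (y ::ₘ b) m) :
    GoodW ((x + 2) ::ₘ a) ((y + 2) ::ₘ b) (m + 2) := by
  obtain ⟨t₁, t₂, U, S, h⟩ := h
  obtain ⟨s, V, hU, hsV, hs, hne, hc, hV⟩ := h.ct₁.extract
  obtain ⟨t, W, hU', htW, ht, hne', hc', hW⟩ := h.ct₂.extract
  have hsU : s ⊆ U := hU ▸ Finset.subset_union_left
  have htU : t ⊆ U := hU' ▸ Finset.subset_union_left
  obtain ⟨v, hvs, hvS⟩ := h.meet₁ hs hne hsU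
  obtain ⟨z, hzt, hzS⟩ := h.meet₂ ht hne' htU
  obtain ⟨n₁, n₂, h1, h2, h12⟩ := fresh2 U
  have h1S : n₁ ∉ S := fun hh => h1 (h.sub hh)
  have h2S : n₂ ∉ S := fun hh => h2 (h.sub hh)
  have hu' := h.cyc.1 z hzS
  have hut := ht.1 z hzt
  set u := t₂ z with hu
  rw [Perm.mul_apply, ← hu] at hu'
  have hne1 : t₁ u ≠ n₁ := by rintro e; exact h1S (e ▸ hu')
  have hne2 : t₁ u ≠ n₂ := by rintro e; exact h2S (e ▸ hu')
  obtain ⟨A1, A2, A3⟩ := ins2 hU hsV hs hc hV h.fix₁ hvs h1 h2 h12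
  obtain ⟨B1, B2, B3⟩ := ins2 hU' htW ht hc' hW h.fix₂ hut h1 h2 h12
  obtain ⟨C1, C2, C3⟩ := cyc_ins2 h.cyc h.fixc h.card (u := t₁ u) (v := v) hu'
    (Finset.mem_insert_of_mem hvS) h1S h2S h12
  have hprod : (swap v n₁ * (swap n₁ n₂ * t₁)) * (swap u n₁ * (swap n₁ n₂ * t₂)) =
      swap v n₁ * (swap (t₁ u) n₂ * (t₁ * t₂)) := by
    have e1 : t₁ * swap u n₁ = swap (t₁ u) n₁ * t₁ := by
      rw [mul_swap_eq_swap_mul, h.fix₁ n₁ h1]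
    have e2 : t₁ * swap n₁ n₂ = swap n₁ n₂ * t₁ := by
      rw [mul_swap_eq_swap_mul, h.fix₁ n₁ h1, h.fix₁ n₂ h2]
    have e3 : swap n₁ n₂ * swap (t₁ u) n₁ = swap (t₁ u) n₂ * swap n₁ n₂ := by
      rw [mul_swap_eq_swap_mul, swap_apply_left, swap_apply_of_ne_of_ne hne1 hne2]
    calc _ = swap v n₁ * (swap n₁ n₂ * (t₁ * swap u n₁) * (swap n₁ n₂ * t₂)) := by group
      _ = swap v n₁ * ((swap n₁ n₂ * swap (t₁ u) n₁) * (t₁ * swap n₁ n₂) * t₂) := by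
        rw [e1]; group
      _ = swap v n₁ * (swap (t₁ u) n₂ * (swap n₁ n₂ * swap n₁ n₂) * (t₁ * t₂)) := by
        rw [e2, e3]; group
      _ = _ := by rw [swap_mul_self, mul_one]
  refine ⟨_, _, U ∪ {n₁, n₂}, S ∪ {n₁, n₂}, ⟨A1, B1, A2, B2,
    Finset.union_subset_union_left h.sub, C3, hprod ▸ C1, hprod ▸ C2, ?_⟩, n₁, by simp, ?_⟩
  · intro P h₁ h₂
    obtain ⟨D1, D2, D3⟩ := A3 P h₁
    obtain ⟨E1, -, -⟩ := B3 P h₂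
    have k2 := h.conn P D1 E1
    have hvU := hsU hvs
    have k3 : ∀ x ∈ U ∪ {n₁, n₂}, (P x ↔ P v) := fun x hx => by
      simp only [Finset.mem_union, Finset.mem_insert, Finset.mem_singleton] at hx
      rcases hx with hx | rfl | rfl
      · exact ⟨k2 x hx v hvU, k2 v hvU x hx⟩
      · exact D2
      · exact D3
    intro x hx y hy
    rw [k3 x hx, k3 y hy]; exact id
  · have : (swap u n₁ * (swap n₁ n₂ * t₂)) n₁ = n₂ := by
      rw [Perm.mul_apply, Perm.mul_apply, h.fix₂ n₁ h1, swap_apply_left,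
        swap_apply_of_ne_of_ne _ h12.symm]
      rintro e; exact h2 (e ▸ htU hut)
    rw [this]; simp

/-- Operation 3. -/
theorem GoodW.op3 {a b : Multiset ℕ} {m : ℕ} (h : GoodW a b m) {n : ℕ} (hn : 2 ≤ n) :
    GoodW (n ::ₘ a) (n ::ₘ b) (m + 2) := by
  obtain ⟨t₁, t₂, U, S, h, w, hwS, huS⟩ := h
  obtain ⟨T, hUT, hT⟩ := fresh U n
  obtain ⟨γ, hγ, hγfix⟩ := exists_cyc T
  obtain ⟨n₁, hn₁⟩ : T.Nonempty := by rw [← Finset.card_pos]; omega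
  have hUT' := Finset.disjoint_left.1 hUT
  have hTU : ∀ x ∈ T, x ∉ U := fun x hx hx' => hUT' hx' hx
  have hγi : ∀ x ∉ T, γ⁻¹ x = x := fun x hx => by rw [Perm.inv_eq_iff_eq, hγfix x hx]
  have hn₂ := hγ.1 n₁ hn₁
  have h12 : n₁ ≠ γ n₁ := by
    intro e
    obtain ⟨y, hy, hne⟩ := Finset.exists_mem_ne (s := T) (by omega) n₁
    refine hne (hγ.2 (fun z => z = n₁) ?_ n₁ hn₁ y hy rfl)
    rintro z - rfl
    exact e.symm
  set n₂ := γ n₁ with hn₂d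
  set u := t₂ w with hu
  have huU := h.sub huS
  have h1 := hTU _ hn₁
  have h2 := hTU _ hn₂
  have h1S : n₁ ∉ S := fun hh => h1 (h.sub hh)
  have h2S : n₂ ∉ S := fun hh => h2 (h.sub hh)
  have hu1 : u ≠ n₁ := by rintro e; exact h1 (e ▸ huU)
  have hu2 : n₂ ≠ u := by intro e; rw [e] at h2; exact h2 huU
  have hcu := h.cyc.1 u huS
  have hcw := h.cyc.1 w hwS
  have hcw' : (t₁ * t₂) w = t₁ u := by rw [Perm.mul_apply]
  rw [hcw'] at hcw
  obtain ⟨C1, C2, C3⟩ := cyc_ins2 h.cyc h.fixc h.card hcu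
    (Finset.mem_insert_of_mem hcw) h2S h1S h12.symm
  have b1 : CT (γ⁻¹ * t₂) (T ∪ U) (n ::ₘ b) := by
    refine CT.cons' (hγ.inv.congr fun x hx => ?_) ⟨n₁, hn₁⟩ hUT.symm hT
      (h.ct₂.congr fun x hx => ?_) rfl
    · rw [Perm.mul_apply, h.fix₂ x (hTU x hx)]
    · rw [Perm.mul_apply, hγi _ (hUT' (h.ct₂.maps x hx))]
  have a1 : CT (t₁ * γ) (T ∪ U) (n ::ₘ a) := by
    refine CT.cons' (hγ.congr fun x hx => ?_) ⟨n₁, hn₁⟩ hUT.symm hT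
      (h.ct₁.congr fun x hx => ?_) rfl
    · rw [Perm.mul_apply, h.fix₁ _ (hTU _ (hγ.1 x hx))]
    · rw [Perm.mul_apply, hγfix _ (hUT' hx)]
  have hmem : ∀ x, swap u n₁ x ∈ T ∪ U ↔ x ∈ T ∪ U := fun x => by
    by_cases hxu : x = u
    · subst hxu; simp [hn₁, huU]
    · by_cases hx1 : x = n₁
      · subst hx1; simp [hn₁, huU]
      · rw [swap_apply_of_ne_of_ne hxu hx1]
  have hs1 : (swap u n₁)⁻¹ = swap u n₁ := swap_inv _ _
  have himg : (T ∪ U).image (swap u n₁) = T ∪ U := by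
    ext x
    rw [Finset.mem_image]
    constructor
    · rintro ⟨y, hy, rfl⟩; exact (hmem y).2 hy
    · intro hx; exact ⟨swap u n₁ x, (hmem x).2 hx, by simp⟩
  have b2 := b1.conj (swap u n₁)
  rw [himg, hs1] at b2
  have hprod : (t₁ * γ) * (swap u n₁ * (γ⁻¹ * t₂) * swap u n₁) =
      swap (t₁ u) n₂ * (swap ((t₁ * t₂) u) n₁ * (t₁ * t₂)) := by
    have e1 : γ * swap u n₁ = swap u n₂ * γ := by
      rw [mul_swap_eq_swap_mul, hγfix u (hUT' huU)]
    have e2 : t₁ * swap u n₂ = swap (t₁ u) n₂ * t₁ := by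
      rw [mul_swap_eq_swap_mul, h.fix₁ n₂ h2]
    have e3 : (t₁ * t₂) * swap u n₁ = swap ((t₁ * t₂) u) n₁ * (t₁ * t₂) := by
      rw [mul_swap_eq_swap_mul, h.fixc n₁ h1S]
    calc _ = t₁ * (γ * swap u n₁) * γ⁻¹ * t₂ * swap u n₁ := by group
      _ = (t₁ * swap u n₂) * t₂ * swap u n₁ := by rw [e1]; group
      _ = swap (t₁ u) n₂ * ((t₁ * t₂) * swap u n₁) := by rw [e2]; group
      _ = _ := by rw [e3]
  have hS2 : S ∪ {n₂, n₁} ⊆ T ∪ U := by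
    refine Finset.union_subset (h.sub.trans Finset.subset_union_right) ?_
    intro x hx
    simp only [Finset.mem_insert, Finset.mem_singleton] at hx
    rcases hx with rfl | rfl
    · exact Finset.mem_union_left _ hn₂
    · exact Finset.mem_union_left _ hn₁
  refine ⟨t₁ * γ, swap u n₁ * (γ⁻¹ * t₂) * swap u n₁, T ∪ U, S ∪ {n₂, n₁},
    ⟨a1, b2, ?_, ?_, hS2, C3, hprod ▸ C1, hprod ▸ C2, ?_⟩, swap u n₁ w, ?_, ?_⟩
  · intro x hx
    rw [Finset.mem_union, not_or] at hx
    rw [Perm.mul_apply, hγfix x hx.1, h.fix₁ x hx.2]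
  · intro x hx
    have hx' : swap u n₁ x ∉ T ∪ U := fun hh => hx ((hmem x).1 hh)
    rw [Finset.mem_union, not_or] at hx'
    rw [Perm.mul_apply, Perm.mul_apply, Perm.mul_apply, h.fix₂ _ hx'.2, hγi _ hx'.1,
      swap_apply_self]
  · intro P h₁ h₂
    have kT : ∀ x ∈ T, ∀ y ∈ T, (P x ↔ P y) := fun x hx y hy => by
      refine hγ.const (fun z hz => ?_) hx hy
      rw [← h₁ z (Finset.mem_union_left _ hz), Perm.mul_apply,
        h.fix₁ _ (hTU _ (hγ.1 z hz))]
    have ku : P u ↔ P n₁ := by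
      have hgi : γ⁻¹ n₂ = n₁ := by rw [Perm.inv_eq_iff_eq]
      have := h₂ n₂ (Finset.mem_union_left _ hn₂)
      rw [Perm.mul_apply, Perm.mul_apply, Perm.mul_apply,
        swap_apply_of_ne_of_ne hu2 h12.symm, h.fix₂ n₂ h2, hgi, swap_apply_right] at this
      rw [this]; exact kT _ hn₂ _ hn₁
    have ks : ∀ x, P (swap u n₁ x) ↔ P x := fun x => by
      by_cases hxu : x = u
      · subst hxu; rw [swap_apply_left]; exact ku.symm
      · by_cases hx1 : x = n₁
        · subst hx1; rw [swap_apply_right]; exact ku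
        · rw [swap_apply_of_ne_of_ne hxu hx1]
    have k2 : ∀ x ∈ U, ∀ y ∈ U, P x → P y := h.conn P (fun x hx => by
        rw [← h₁ x (Finset.mem_union_right _ hx), Perm.mul_apply, hγfix x (hUT' hx)])
      (fun x hx => by
        have := h₂ (swap u n₁ x) ((hmem x).2 (Finset.mem_union_right _ hx))
        rw [ks, Perm.mul_apply, Perm.mul_apply, swap_apply_self, ks, Perm.mul_apply,
          hγi _ (hUT' (h.ct₂.maps x hx))] at this
        exact this)
    have k3 : ∀ x ∈ T ∪ U, (P x ↔ P u) := fun x hx => by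
      rcases Finset.mem_union.1 hx with hx | hx
      · rw [ku]; exact kT x hx n₁ hn₁
      · exact ⟨k2 x hx u huU, k2 u huU x hx⟩
    intro x hx y hy
    rw [k3 x hx, k3 y hy]; exact id
  · by_cases hwu : w = u
    · rw [hwu, swap_apply_left]; simp
    · rw [swap_apply_of_ne_of_ne hwu (by rintro rfl; exact h1S hwS)]; simp [hwS]
  · rw [Perm.mul_apply, swap_apply_self, Perm.mul_apply, Perm.mul_apply, ← hu,
      hγi u (hUT' huU), swap_apply_left]
    simp

theorem Good.w_of_full {a b : Multiset ℕ} {m : ℕ} (h : Good a b m) (hm : a.sum = m + 1) :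
    GoodW a b m := by
  obtain ⟨t₁, t₂, U, S, h⟩ := h
  have hSU : S = U := Finset.eq_of_subset_of_card_le h.sub (by rw [h.ct₁.card, hm, h.card])
  obtain ⟨w, hw⟩ : S.Nonempty := by rw [← Finset.card_pos, h.card]; omega
  exact ⟨t₁, t₂, U, S, h, w, hw, by subst hSU; exact h.ct₂.maps w hw⟩

end Ops2

section Ops3

theorem swap_identity {u v n₁ n₂ n₃ n₄ : ℕ} (h12 : n₁ ≠ n₂) (h13 : n₁ ≠ n₃) (h14 : n₁ ≠ n₄)
    (h23 : n₂ ≠ n₃) (h24 : n₂ ≠ n₄) (h34 : n₃ ≠ n₄) (hu1 : u ≠ n₁) (hu2 : u ≠ n₂) (hu3 : u ≠ n₃)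
    (hu4 : u ≠ n₄) (hv1 : v ≠ n₁) (hv2 : v ≠ n₂) (hv3 : v ≠ n₃) (hv4 : v ≠ n₄) :
    swap n₁ n₃ * swap n₂ n₄ * (swap v n₃ * (swap n₃ n₄ * (swap u n₁ * swap n₁ n₂))) =
      swap n₄ n₁ * (swap v n₄ * (swap n₂ n₃ * swap u n₂)) := by
  ext z
  simp only [Perm.mul_apply, swap_apply_def]
  grind

theorem CT.pair {f : Perm ℕ} {U : Finset ℕ} {a : Multiset ℕ} (h : CT f U a)
    (hfix : ∀ x ∉ U, f x = x) {p q : ℕ} (hp : p ∉ U) (hq : q ∉ U) (hpq : p ≠ q) :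
    CT (f * swap p q) (U ∪ {p, q}) (2 ::ₘ a) ∧ ∀ x ∉ U ∪ {p, q}, (f * swap p q) x = x := by
  have hcomm : f * swap p q = swap p q * f := by
    rw [mul_swap_eq_swap_mul, hfix p hp, hfix q hq]
  rw [hcomm]
  constructor
  · refine CT.cons' (s := {p, q}) ?_ ⟨p, by simp⟩ ?_ (Finset.card_pair hpq)
      (h.congr fun x hx => ?_) (Finset.union_comm _ _)
    · rw [Finset.pair_comm]
      exact (Cyc.single (hfix p hp)).insert (by simp) (by simpa using hpq.symm) (hfix q hq)
    · rw [Finset.disjoint_left]; simp [hp, hq]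
    · rw [Perm.mul_apply, swap_apply_of_ne_of_ne]
      · rintro e; exact hp (e ▸ h.maps x hx)
      · rintro e; exact hq (e ▸ h.maps x hx)
  · intro x hx
    simp only [Finset.mem_union, Finset.mem_insert, Finset.mem_singleton, not_or] at hx
    rw [Perm.mul_apply, hfix x hx.1, swap_apply_of_ne_of_ne hx.2.1 hx.2.2]

/-- Operation 7. -/
theorem Good.op7 {a b B : Multiset ℕ} {x z m : ℕ} (h : Good a (x ::ₘ b) m) (hm : a.sum = m + 1)
    (hB : (x + 2) ::ₘ b = z ::ₘ B) : Good (2 ::ₘ 2 ::ₘ a) ((z + 2) ::ₘ B) (m + 4) := by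
  obtain ⟨t₁, t₂, U, S, h⟩ := h
  have hSU : S = U := Finset.eq_of_subset_of_card_le h.sub (by rw [h.ct₁.card, hm, h.card])
  subst hSU
  obtain ⟨s, V, hU, hsV, hs, hne, hc, hV⟩ := h.ct₂.extract
  have hsU : s ⊆ S := hU ▸ Finset.subset_union_left
  obtain ⟨n₁, n₂, h1, h2, h12⟩ := fresh2 S
  obtain ⟨n₃, n₄, h3, h4, h34⟩ := fresh2 (S ∪ {n₁, n₂})
  obtain ⟨u, hus⟩ := hne
  obtain ⟨B1, B2, -⟩ := ins2 hU hsV hs hc hV h.fix₂ hus h1 h2 h12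
  have huS := hsU hus
  rw [hB] at B1
  obtain ⟨t, W, hU', htW, ht, ⟨v, hvt⟩, hc', hW⟩ := B1.extract
  have htU : t ⊆ S ∪ {n₁, n₂} := hU' ▸ Finset.subset_union_left
  have hu1 : u ≠ n₁ := by rintro rfl; exact h1 huS
  have hu2 : u ≠ n₂ := by rintro rfl; exact h2 huS
  obtain ⟨v, hvt, hvS⟩ : ∃ v ∈ t, v ∈ S := by
    have g1 := ht.1 n₁
    have g2 := ht.1 n₂
    rw [Perm.mul_apply, Perm.mul_apply, h.fix₂ n₁ h1, swap_apply_left,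
        swap_apply_of_ne_of_ne hu2.symm h12.symm] at g1
    rw [Perm.mul_apply, Perm.mul_apply, h.fix₂ n₂ h2, swap_apply_right, swap_apply_right] at g2
    have := htU hvt
    simp only [Finset.mem_union, Finset.mem_insert, Finset.mem_singleton] at this
    rcases this with h | rfl | rfl
    · exact ⟨v, hvt, h⟩
    · exact ⟨u, g2 (g1 hvt), huS⟩
    · exact ⟨u, g2 hvt, huS⟩
  obtain ⟨D1, D2, -⟩ := ins2 hU' htW ht hc' hW B2 hvt h3 h4 h34
  simp only [Finset.mem_union, Finset.mem_insert, Finset.mem_singleton, not_or] at h3 h4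
  obtain ⟨h3, h31, h32⟩ := h3
  obtain ⟨h4, h41, h42⟩ := h4
  obtain ⟨A1, A2⟩ := h.ct₁.pair h.fix₁ h1 h3 (Ne.symm h31)
  obtain ⟨A3, A4⟩ := A1.pair A2 (p := n₂) (q := n₄) (by simp [h2, h12.symm, Ne.symm h32])
    (by simp [h4, h41, h34.symm]) (Ne.symm h42)
  have hS : ∀ y ∈ S, t₁ y ∈ S := h.ct₁.maps
  have nS : ∀ y ∈ S, ∀ n ∉ S, y ≠ n := fun y hy n hn e => hn (e ▸ hy)
  obtain ⟨C1, C2, C3⟩ := cyc_ins2 h.cyc h.fixc h.card (u := t₁ u) (v := n₂) (n₁ := n₃) (n₂ := n₂)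
    (hS u huS) (by simp) h3 h2 h32
  obtain ⟨E1, E2, E3⟩ := cyc_ins2 C1 C2 C3 (u := t₁ v) (v := n₄) (n₁ := n₁) (n₂ := n₄)
    (by simp [hS v hvS]) (by simp) (by simp [h1, h12, Ne.symm h31])
    (by simp [h4, h42, h34.symm]) (Ne.symm h41)
  have hprod : (t₁ * swap n₁ n₃ * swap n₂ n₄) *
      (swap v n₃ * (swap n₃ n₄ * (swap u n₁ * (swap n₁ n₂ * t₂)))) =
      swap n₄ n₁ * (swap (t₁ v) n₄ * (swap n₂ n₃ * (swap (t₁ u) n₂ * (t₁ * t₂)))) := by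
    have hid := swap_identity (u := u) (v := v) h12 (Ne.symm h31) (Ne.symm h41) (Ne.symm h32)
      (Ne.symm h42) h34 hu1 hu2 (nS u huS _ h3) (nS u huS _ h4) (nS v hvS _ h1)
      (nS v hvS _ h2) (nS v hvS _ h3) (nS v hvS _ h4)
    have f1 := h.fix₁ n₁ h1
    have f2 := h.fix₁ n₂ h2
    have f3 := h.fix₁ n₃ h3
    have f4 := h.fix₁ n₄ h4
    have e1 : t₁ * swap n₄ n₁ = swap n₄ n₁ * t₁ := by rw [mul_swap_eq_swap_mul, f4, f1]
    have e2 : t₁ * swap v n₄ = swap (t₁ v) n₄ * t₁ := by rw [mul_swap_eq_swap_mul, f4]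
    have e3 : t₁ * swap n₂ n₃ = swap n₂ n₃ * t₁ := by rw [mul_swap_eq_swap_mul, f2, f3]
    have e4 : t₁ * swap u n₂ = swap (t₁ u) n₂ * t₁ := by rw [mul_swap_eq_swap_mul, f2]
    calc _ = t₁ * (swap n₁ n₃ * swap n₂ n₄ *
          (swap v n₃ * (swap n₃ n₄ * (swap u n₁ * swap n₁ n₂)))) * t₂ := by
          simp only [mul_assoc]
      _ = (t₁ * swap n₄ n₁) * (swap v n₄ * (swap n₂ n₃ * swap u n₂)) * t₂ := by
          rw [hid]; simp only [mul_assoc]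
      _ = swap n₄ n₁ * ((t₁ * swap v n₄) * (swap n₂ n₃ * swap u n₂)) * t₂ := by
          rw [e1]; simp only [mul_assoc]
      _ = swap n₄ n₁ * (swap (t₁ v) n₄ * ((t₁ * swap n₂ n₃) * swap u n₂)) * t₂ := by
          rw [e2]; simp only [mul_assoc]
      _ = swap n₄ n₁ * (swap (t₁ v) n₄ * (swap n₂ n₃ * (t₁ * swap u n₂))) * t₂ := by
          rw [e3]; simp only [mul_assoc]
      _ = _ := by rw [e4]; simp only [mul_assoc]
  have U1 : S ∪ {n₁, n₃} ∪ {n₂, n₄} = S ∪ {n₁, n₂} ∪ {n₃, n₄} := by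
    ext z; simp only [Finset.mem_union, Finset.mem_insert, Finset.mem_singleton]; tauto
  have U2 : S ∪ {n₃, n₂} ∪ {n₁, n₄} = S ∪ {n₁, n₂} ∪ {n₃, n₄} := by
    ext z; simp only [Finset.mem_union, Finset.mem_insert, Finset.mem_singleton]; tauto
  rw [U1] at A3 A4
  rw [U2, ← hprod] at E1 E2
  rw [U2] at E3
  exact ⟨_, _, _, _, A3, D1, A4, D2, subset_rfl, E3, E1, E2, conn_of_full D1.maps E1⟩

theorem good_224 : Good {2, 2} {4} 3 := by
  have base : CT (1 : Perm ℕ) ∅ 0 := CT.nil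
  obtain ⟨A1, A2⟩ := base.pair (by simp) (p := 0) (q := 2) (by simp) (by simp) (by simp)
  obtain ⟨A3, A4⟩ := A1.pair A2 (p := 1) (q := 3) (by simp) (by simp) (by simp)
  have B0 : Cyc (1 : Perm ℕ) {0} := Cyc.single rfl
  have B1 := B0.insert (x := 0) (y := 1) (by simp) (by simp) (by simp)
  have B2 := B1.insert (x := 0) (y := 2) (by simp) (by simp) (by decide)
  have B3 := B2.insert (x := 0) (y := 3) (by simp) (by simp) (by decide)
  have hU : (∅ : Finset ℕ) ∪ {0, 2} ∪ {1, 3} = {3, 2, 1, 0} := by decide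
  rw [hU] at A3 A4
  have hprod : ∀ x ∈ ({3, 2, 1, 0} : Finset ℕ), (1 * swap 0 2 * swap 1 3 *
     (swap 0 3 * (swap 0 2 * (swap 0 1 * 1))) : Perm ℕ) x =
     ((swap 0 3 * (swap 0 2 * (swap 0 1 * 1)))⁻¹ : Perm ℕ) x := by
    decide
  have B4 : ∀ x ∉ ({3, 2, 1, 0} : Finset ℕ),
      ((swap 0 3 * (swap 0 2 * (swap 0 1 * 1)) : Perm ℕ)) x = x := by
    intro x hx
    simp only [Finset.mem_insert, Finset.mem_singleton, not_or] at hx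
    simp [swap_apply_def, hx]
  have C1 := B3.inv.congr hprod
  refine ⟨_, _, _, _, A3, CT.single B3 (by simp) rfl, A4, B4, subset_rfl, rfl, C1, ?_,
    conn_of_full B3.1 C1⟩
  intro x hx
  rw [Perm.mul_apply, B4 x hx, A4 x hx]

end Ops3

section ThmA

structure HA (a b : Multiset ℕ) (m g d : ℕ) : Prop where
  pa : ∀ x ∈ a, 0 < x
  pb : ∀ x ∈ b, 0 < x
  sa : a.sum = d
  sb : b.sum = d
  eq : a.card + b.card + 2 * g = m + 2
  le : m + 1 ≤ d
  gd : 1 ≤ g ∨ m + 1 = d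

theorem HA.symm {a b m g d} (h : HA a b m g d) : HA b a m g d :=
  ⟨h.pb, h.pa, h.sb, h.sa, by have := h.eq; omega, h.le, h.gd⟩

def TA (d : ℕ) : Prop := ∀ a b m g, HA a b m g d → Good a b m

theorem ms_ge {a : Multiset ℕ} {k : ℕ} (h : ∀ x ∈ a, k ≤ x) : a.card * k ≤ a.sum := by
  have := Multiset.card_nsmul_le_sum h
  simpa using this

theorem ms_le {a : Multiset ℕ} {k : ℕ} (h : ∀ x ∈ a, x ≤ k) : a.sum ≤ a.card * k := by
  have := Multiset.sum_le_card_nsmul a k h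
  simpa using this

theorem HA.red1 {a b m g d n x} (IH : ∀ d' < d, TA d') (h : HA (n ::ₘ a) ((x + n) ::ₘ b) m g d)
    (hn : 0 < n) (hx : 0 < x) (hm : m + n ≤ d) (hg : 1 ≤ g ∨ n = 1) :
    Good (n ::ₘ a) ((x + n) ::ₘ b) m := by
  obtain ⟨pa, pb, sa, sb, eq, le, gd⟩ := h
  simp only [Multiset.sum_cons, Multiset.card_cons] at sa sb eq
  have hm0 : 1 ≤ m := by
    by_contra hc
    have ha : a.card = 0 := by omega
    have hb : b.card = 0 := by omega
    rw [Multiset.card_eq_zero] at ha hb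
    subst ha hb
    simp at sa sb; omega
  obtain ⟨m, rfl⟩ : ∃ m', m = m' + 1 := ⟨m - 1, by omega⟩
  refine (Good.op1 (IH (d - n) (by omega) _ _ m g ?_) hn).symm
  refine ⟨?_, ?_, ?_, by omega, ?_, by omega, by omega⟩
  · intro y hy
    rcases Multiset.mem_cons.1 hy with rfl | hy
    · exact hx
    · exact pb y (Multiset.mem_cons_of_mem hy)
  · intro y hy; exact pa y (Multiset.mem_cons_of_mem hy)
  · rw [Multiset.sum_cons]; omega
  · rw [Multiset.card_cons]; omega

theorem HA.red2 {a b m g d x y} (IH : ∀ d' < d, TA d')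
    (h : HA ((x + 2) ::ₘ a) ((y + 2) ::ₘ b) m g d)
    (hx : 0 < x) (hy : 0 < y) (hg : 2 ≤ g ∨ (1 ≤ g ∧ m + 1 = d)) :
    Good ((x + 2) ::ₘ a) ((y + 2) ::ₘ b) m := by
  obtain ⟨pa, pb, sa, sb, eq, le, gd⟩ := h
  simp only [Multiset.sum_cons, Multiset.card_cons] at sa sb eq
  obtain ⟨m, rfl⟩ : ∃ m', m = m' + 2 := ⟨m - 2, by omega⟩
  refine (Good.op2 (IH (d - 2) (by omega) _ _ m (g - 1) ?_)).good
  refine ⟨?_, ?_, ?_, ?_, ?_, by omega, by omega⟩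
  · intro z hz
    rcases Multiset.mem_cons.1 hz with rfl | hz
    · exact hx
    · exact pa z (Multiset.mem_cons_of_mem hz)
  · intro z hz
    rcases Multiset.mem_cons.1 hz with rfl | hz
    · exact hy
    · exact pb z (Multiset.mem_cons_of_mem hz)
  · rw [Multiset.sum_cons]; omega
  · rw [Multiset.sum_cons]; omega
  · simp only [Multiset.card_cons]; omega

theorem HA.red3 {a b m g d} (IH : ∀ d' < d, TA d')
    (h : HA (2 ::ₘ a) (2 ::ₘ b) m g d) (hm : m + 1 = d) (hd : 2 < d) :
    Good (2 ::ₘ a) (2 ::ₘ b) m := by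
  obtain ⟨pa, pb, sa, sb, eq, le, gd⟩ := h
  simp only [Multiset.sum_cons, Multiset.card_cons] at sa sb eq
  obtain ⟨m, rfl⟩ : ∃ m', m = m' + 2 := ⟨m - 2, by omega⟩
  have := IH (d - 2) (by omega) a b m g
    ⟨fun z hz => pa z (Multiset.mem_cons_of_mem hz), fun z hz => pb z (Multiset.mem_cons_of_mem hz),
      by omega, by omega, by omega, by omega, by omega⟩
  exact ((this.w_of_full (by omega)).op3 le_rfl).good

theorem HA.red7 {a b B m g d x z} (IH : ∀ d' < d, TA d')
    (h : HA (2 ::ₘ 2 ::ₘ a) ((z + 2) ::ₘ B) m g d) (hB : (x + 2) ::ₘ b = z ::ₘ B) (hx : 0 < x)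
    (hm : m + 1 = d) (hg : 1 ≤ g) (hb : ∀ y ∈ b, 0 < y) :
    Good (2 ::ₘ 2 ::ₘ a) ((z + 2) ::ₘ B) m := by
  obtain ⟨pa, pb, sa, sb, eq, le, gd⟩ := h
  simp only [Multiset.sum_cons, Multiset.card_cons] at sa sb eq
  have h1 := congrArg Multiset.sum hB
  have h2 := congrArg Multiset.card hB
  simp only [Multiset.sum_cons, Multiset.card_cons] at h1 h2
  obtain ⟨m, rfl⟩ : ∃ m', m = m' + 4 := ⟨m - 4, by omega⟩
  refine Good.op7 (IH (d - 4) (by omega) a (x ::ₘ b) m (g - 1) ?_) (by omega) hB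
  refine ⟨?_, ?_, ?_, ?_, ?_, by omega, by omega⟩
  · intro z hz
    exact pa z (Multiset.mem_cons_of_mem (Multiset.mem_cons_of_mem hz))
  · intro z hz
    rcases Multiset.mem_cons.1 hz with rfl | hz
    · exact hx
    · exact hb z hz
  · omega
  · rw [Multiset.sum_cons]; omega
  · simp only [Multiset.card_cons]; omega

theorem HA.one {a b m g d} (IH : ∀ d' < d, TA d') (h : HA a b m g d) (h1 : 1 ∈ a) :
    Good a b m := by
  obtain ⟨a, rfl⟩ := Multiset.exists_cons_of_mem h1
  by_cases hb : ∃ y ∈ b, 2 ≤ y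
  · obtain ⟨y, hy, hy2⟩ := hb
    obtain ⟨b, rfl⟩ := Multiset.exists_cons_of_mem hy
    obtain ⟨x, rfl⟩ : ∃ x, y = x + 1 := ⟨y - 1, by omega⟩
    exact h.red1 IH one_pos (by omega) h.le (Or.inr rfl)
  · push Not at hb
    have k1 := ms_le (a := b) (k := 1) (fun x hx => by have := hb x hx; omega)
    have k2 := ms_ge (k := 1) h.pb
    have eq := h.eq
    have le := h.le
    have sb := h.sb
    have sa := h.sa
    simp only [Multiset.sum_cons, Multiset.card_cons] at eq sa
    have gd := h.gd
    have : a.card = 0 := by omega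
    rw [Multiset.card_eq_zero] at this
    subst this
    have hb1 : b.card = 1 := by simp at sa; omega
    obtain ⟨y, rfl⟩ := Multiset.card_eq_one.1 hb1
    simp at sa sb eq
    have hm : m = 0 := by omega
    subst hm
    have hy : y = 1 := by omega
    subst hy
    exact good_base one_pos

theorem HA.allTwo {a b m g d} (IH : ∀ d' < d, TA d') (h : HA a b m g d) (ha : ∀ x ∈ a, x = 2)
    (hb : ∀ x ∈ b, 2 ≤ x) (hm : m + 1 = d) (hg : 1 ≤ g) : Good a b m := by
  have sa := h.sa
  have sb := h.sb
  have eq := h.eq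
  obtain ⟨k, hk⟩ : ∃ k, a = Multiset.replicate k 2 := ⟨_, Multiset.eq_replicate_card.2 ha⟩
  have hkd : 2 * k = d := by rw [← sa, hk]; simp; ring
  obtain ⟨y, hy⟩ : ∃ y, y ∈ b := by
    apply Multiset.exists_mem_of_ne_zero
    rintro rfl
    simp at sb; omega
  by_cases h2 : 2 ∈ b
  · obtain ⟨b, rfl⟩ := Multiset.exists_cons_of_mem h2
    obtain ⟨k, rfl⟩ : ∃ k', k = k' + 1 := ⟨k - 1, by omega⟩
    rw [Multiset.replicate_succ] at hk
    subst hk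
    refine h.red3 IH hm ?_
    by_contra hc
    simp at eq sb
    omega
  · have hb3 : ∀ x ∈ b, 3 ≤ x := fun x hx => by
      have := hb x hx
      have : x ≠ 2 := by rintro rfl; exact h2 hx
      omega
    obtain ⟨b, rfl⟩ := Multiset.exists_cons_of_mem hy
    have hy3 := hb3 y hy
    have hk2 : 2 ≤ k := by simp at sb; omega
    obtain ⟨k, rfl⟩ : ∃ k', k = k' + 2 := ⟨k - 2, by omega⟩
    rw [Multiset.replicate_succ, Multiset.replicate_succ] at hk
    subst hk
    have hbp : ∀ z ∈ b, 0 < z := fun z hz => h.pb z (Multiset.mem_cons_of_mem hz)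
    by_cases h5 : 5 ≤ y
    · obtain ⟨x, rfl⟩ : ∃ x, y = x + 2 + 2 := ⟨y - 4, by omega⟩
      exact h.red7 IH rfl (by omega) hm hg hbp
    · by_cases hb0 : b = 0
      · subst hb0
        simp at sb eq
        have : y = 4 := by omega
        subst this
        have : k = 0 := by omega
        subst this
        have : m = 3 := by omega
        subst this
        simpa using good_224
      · obtain ⟨w, hw⟩ := Multiset.exists_mem_of_ne_zero hb0
        obtain ⟨b, rfl⟩ := Multiset.exists_cons_of_mem hw
        have hw3 := hb3 w (Multiset.mem_cons_of_mem hw)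
        obtain ⟨z, rfl⟩ : ∃ x, y = x + 2 := ⟨y - 2, by omega⟩
        obtain ⟨x, rfl⟩ : ∃ x, w = x + 2 := ⟨w - 2, by omega⟩
        refine h.red7 IH (b := z ::ₘ b) (Multiset.cons_swap _ _ _) (by omega) hm hg ?_
        intro v hv
        rcases Multiset.mem_cons.1 hv with rfl | hv
        · omega
        · exact hbp v (Multiset.mem_cons_of_mem hv)

theorem uniform {β k : ℕ} (hβ : 3 ≤ β) (hk : 1 ≤ k) :
    GoodW (Multiset.replicate k β) (Multiset.replicate k β) (2 * k) := by
  induction k, hk using Nat.le_induction with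
  | base =>
    obtain ⟨x, rfl⟩ : ∃ x, β = x + 2 := ⟨β - 2, by omega⟩
    have := Good.op2 (good_base (x := x) (by omega))
    simpa using this
  | succ k hk ih =>
    rw [Multiset.replicate_succ]
    exact ih.op3 (by omega)

theorem HA.two {a b m g d} (IH : ∀ d' < d, TA d') (h : HA a b m g d) (h2 : 2 ∈ a)
    (hm : m + 2 ≤ d) (hg : 1 ≤ g) (h3 : ∃ y ∈ b, 3 ≤ y) : Good a b m := by
  obtain ⟨a, rfl⟩ := Multiset.exists_cons_of_mem h2
  obtain ⟨y, hy, hy2⟩ := h3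
  obtain ⟨b, rfl⟩ := Multiset.exists_cons_of_mem hy
  obtain ⟨x, rfl⟩ : ∃ x, y = x + 2 := ⟨y - 2, by omega⟩
  exact h.red1 IH two_pos (by omega) hm (Or.inl hg)

theorem HA.beta {a b m d β} (IH : ∀ d' < d, TA d') (h : HA a b m 1 d) (hβ : 3 ≤ β) (h2 : β ∈ a)
    (ha : ∀ x ∈ a, β ≤ x) (hb : ∀ x ∈ b, β ≤ x) (h3 : ∃ y ∈ b, β < y) : Good a b m := by
  have k1 := ms_ge ha
  have k2 := ms_ge hb
  have eq := h.eq
  rw [h.sa] at k1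
  rw [h.sb] at k2
  have sa := h.sa
  have sb := h.sb
  obtain ⟨a, rfl⟩ := Multiset.exists_cons_of_mem h2
  obtain ⟨y, hy, hy2⟩ := h3
  obtain ⟨b, rfl⟩ := Multiset.exists_cons_of_mem hy
  obtain ⟨x, rfl⟩ : ∃ x, y = x + β := ⟨y - β, by omega⟩
  have k3 := ms_ge (a := b) fun z hz => hb z (Multiset.mem_cons_of_mem hz)
  refine h.red1 IH (by omega) (by omega) ?_ (Or.inl le_rfl)
  simp only [Multiset.sum_cons, Multiset.card_cons] at sa sb k1 k2 eq
  have hac : 1 ≤ a.card := by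
    by_contra hc
    have : a.card = 0 := by omega
    rw [Multiset.card_eq_zero] at this
    subst this
    simp at sa; omega
  have hk : 2 * β ≤ d := by nlinarith
  have hmm : m = a.card + b.card + 2 := by omega
  generalize a.card = p at *
  generalize b.card = q at *
  subst hmm
  have h4 : (p + q + 2) * β + 1 ≤ 2 * d := by nlinarith
  by_contra hc
  push Not at hc
  have h5 : d + 1 ≤ p + q + 2 + β := by omega
  have h6 : (d + 1) * β ≤ (p + q + 2 + β) * β := Nat.mul_le_mul_right _ h5
  obtain ⟨e, rfl⟩ : ∃ e, β = e + 3 := ⟨β - 3, by omega⟩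
  nlinarith

theorem thmA (d : ℕ) : TA d := by
  induction d using Nat.strong_induction_on with
  | _ d IH =>
  intro a b m g h
  by_cases h1a : 1 ∈ a
  · exact h.one IH h1a
  by_cases h1b : 1 ∈ b
  · exact (h.symm.one IH h1b).symm
  have ha2 : ∀ x ∈ a, 2 ≤ x := fun x hx => by
    have := h.pa x hx
    have : x ≠ 1 := by rintro rfl; exact h1a hx
    omega
  have hb2 : ∀ x ∈ b, 2 ≤ x := fun x hx => by
    have := h.pb x hx
    have : x ≠ 1 := by rintro rfl; exact h1b hx
    omega
  have k1 := ms_ge ha2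
  have k2 := ms_ge hb2
  have sa := h.sa
  have sb := h.sb
  have eq := h.eq
  have le := h.le
  have gd := h.gd
  have hg : 1 ≤ g := by omega
  have nea : ∃ x, x ∈ a := by
    apply Multiset.exists_mem_of_ne_zero
    rintro rfl
    simp at sa; omega
  have neb : ∃ x, x ∈ b := by
    apply Multiset.exists_mem_of_ne_zero
    rintro rfl
    simp at sb; omega
  by_cases hm : m + 1 = d
  · by_cases h3a : ∃ x ∈ a, 3 ≤ x
    · by_cases h3b : ∃ x ∈ b, 3 ≤ x
      · obtain ⟨x, hx, hx3⟩ := h3a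
        obtain ⟨y, hy, hy3⟩ := h3b
        obtain ⟨a, rfl⟩ := Multiset.exists_cons_of_mem hx
        obtain ⟨b, rfl⟩ := Multiset.exists_cons_of_mem hy
        obtain ⟨x, rfl⟩ : ∃ z, x = z + 2 := ⟨x - 2, by omega⟩
        obtain ⟨y, rfl⟩ : ∃ z, y = z + 2 := ⟨y - 2, by omega⟩
        exact h.red2 IH (by omega) (by omega) (Or.inr ⟨hg, hm⟩)
      · push Not at h3b
        exact (h.symm.allTwo IH (fun x hx => by
          have := h3b x hx; have := hb2 x hx; omega) ha2 hm hg).symm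
    · push Not at h3a
      exact h.allTwo IH (fun x hx => by
          have := h3a x hx; have := ha2 x hx; omega) hb2 hm hg
  have hm2 : m + 2 ≤ d := by omega
  by_cases h3a : ∃ x ∈ a, 3 ≤ x
  swap
  · push Not at h3a
    have k3 := ms_le (a := a) (k := 2) fun x hx => by have := h3a x hx; omega
    have h2a : 2 ∈ a := by
      obtain ⟨x, hx⟩ := nea
      have h1 := h3a x hx
      have h2 := ha2 x hx
      have : x = 2 := by omega
      rwa [this] at hx
    refine h.two IH h2a hm2 hg ?_
    by_contra hc
    push Not at hc
    have k4 := ms_le (a := b) (k := 2) fun x hx => by have := hc x hx; omega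
    omega
  by_cases h2b : 2 ∈ b
  · exact (h.symm.two IH h2b hm2 hg h3a).symm
  have hb3 : ∀ x ∈ b, 3 ≤ x := fun x hx => by
    have := hb2 x hx
    have : x ≠ 2 := by rintro rfl; exact h2b hx
    omega
  by_cases h2a : 2 ∈ a
  · exact h.two IH h2a hm2 hg (by obtain ⟨x, hx⟩ := neb; exact ⟨x, hx, hb3 x hx⟩)
  have ha3 : ∀ x ∈ a, 3 ≤ x := fun x hx => by
    have := ha2 x hx
    have : x ≠ 2 := by rintro rfl; exact h2a hx
    omega
  by_cases hg2 : 2 ≤ g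
  · obtain ⟨x, hx⟩ := nea
    obtain ⟨y, hy⟩ := neb
    have hx3 := ha3 x hx
    have hy3 := hb3 y hy
    obtain ⟨a, rfl⟩ := Multiset.exists_cons_of_mem hx
    obtain ⟨b, rfl⟩ := Multiset.exists_cons_of_mem hy
    obtain ⟨x, rfl⟩ : ∃ z, x = z + 2 := ⟨x - 2, by omega⟩
    obtain ⟨y, rfl⟩ : ∃ z, y = z + 2 := ⟨y - 2, by omega⟩
    exact h.red2 IH (by omega) (by omega) (Or.inl hg2)
  have hg1 : g = 1 := by omega
  subst hg1
  obtain ⟨β, hβ, hmin⟩ : ∃ β ∈ (a + b).toFinset, ∀ x ∈ (a + b).toFinset, β ≤ x := by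
    obtain ⟨x, hx⟩ := nea
    exact Finset.exists_min_image (a + b).toFinset id ⟨x, by simp [hx]⟩
  simp only [Multiset.mem_toFinset, Multiset.mem_add] at hβ hmin
  have hma : ∀ x ∈ a, β ≤ x := fun x hx => hmin x (Or.inl hx)
  have hmb : ∀ x ∈ b, β ≤ x := fun x hx => hmin x (Or.inr hx)
  have hβ3 : 3 ≤ β := by
    rcases hβ with h | h
    · exact ha3 _ h
    · exact hb3 _ h
  by_cases hga : ∃ x ∈ a, β < x
  · by_cases hβb : β ∈ b
    · exact (h.symm.beta IH hβ3 hβb hmb hma hga).symm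
    · refine h.beta IH hβ3 (hβ.resolve_right hβb) hma hmb ?_
      obtain ⟨y, hy⟩ := neb
      refine ⟨y, hy, lt_of_le_of_ne (hmb y hy) ?_⟩
      rintro rfl; exact hβb hy
  push Not at hga
  have hae : a = Multiset.replicate a.card β :=
    Multiset.eq_replicate_card.2 fun x hx => le_antisymm (hga x hx) (hma x hx)
  have hβa : β ∈ a := by
    obtain ⟨x, hx⟩ := nea
    rwa [← le_antisymm (hga x hx) (hma x hx)]
  by_cases hgb : ∃ x ∈ b, β < x
  · exact h.beta IH hβ3 hβa hma hmb hgb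
  push Not at hgb
  have hbe : b = Multiset.replicate b.card β :=
    Multiset.eq_replicate_card.2 fun x hx => le_antisymm (hgb x hx) (hmb x hx)
  have s1 : a.card * β = d := by rw [← sa]; conv_rhs => rw [hae]; simp
  have s2 : b.card * β = d := by rw [← sb]; conv_rhs => rw [hbe]; simp
  have hc : a.card = b.card := Nat.eq_of_mul_eq_mul_right (by omega : 0 < β) (s1.trans s2.symm)
  have hmm : m = 2 * a.card := by omega
  have hpos : 1 ≤ a.card := Multiset.card_pos_iff_exists_mem.2 nea
  rw [hae, hbe, ← hc, hmm]
  exact (uniform hβ3 hpos).good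

end ThmA

section Transport

theorem good_G0 (a : Multiset ℕ) (h0 : a ≠ 0) (ha : ∀ x ∈ a, 0 < x) :
    Good a {a.sum} (a.card - 1) := by
  induction a using Multiset.induction_on with
  | empty => exact absurd rfl h0
  | cons x a ih =>
    by_cases h : a = 0
    · subst h
      simpa using good_base (ha x (by simp))
    · have := Good.op1 (a := 0) (by simpa using
        (ih h fun y hy => ha y (Multiset.mem_cons_of_mem hy)).symm) (ha x (by simp))
      have hc : 0 < a.card := Multiset.card_pos.2 h
      have e : a.card - 1 + 1 = (x ::ₘ a).card - 1 := by rw [Multiset.card_cons]; omega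
      rw [e] at this
      have := this.symm
      rw [Multiset.sum_cons, add_comm x]
      simpa using this

theorem good_R1 {a : Multiset ℕ} {d m h : ℕ} (ha : ∀ x ∈ a, 0 < x) (hs : a.sum = d) (hd : 0 < d)
    (he : a.card + 2 * h = m + 1) (hm : m + 1 ≤ d) : Good a {d} m := by
  by_cases hh : 1 ≤ h
  · exact thmA d _ _ m h ⟨ha, by simpa using hd, hs, by simp, by simp; omega, hm, Or.inl hh⟩
  · have := good_G0 a (by rintro rfl; simp at hs; omega) ha
    rw [hs] at this
    convert this using 1
    omega

theorem good_R2 {a : Multiset ℕ} {d m h : ℕ} (ha : ∀ x ∈ a, 0 < x) (hs : a.sum = d) (hd : 2 ≤ d)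
    (he : a.card + 2 * h = m) (hm : m + 1 ≤ d) : Good a (1 ::ₘ {d - 1}) m := by
  by_cases hh : 1 ≤ h
  · refine thmA d _ _ m h ⟨ha, ?_, hs, ?_, by simp; omega, hm, Or.inl hh⟩
    · intro x hx
      simp at hx
      omega
    · simp; omega
  · obtain ⟨x, hx, hx2⟩ : ∃ x ∈ a, 2 ≤ x := by
      by_contra hc
      push Not at hc
      have := ms_le (a := a) (k := 1) fun x hx => by have := hc x hx; omega
      omega
    obtain ⟨a, rfl⟩ := Multiset.exists_cons_of_mem hx
    obtain ⟨y, rfl⟩ : ∃ z, x = z + 1 := ⟨x - 1, by omega⟩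
    have := good_G0 (y ::ₘ a) (by simp) (fun z hz => by
      rcases Multiset.mem_cons.1 hz with rfl | hz
      · omega
      · exact ha z (Multiset.mem_cons_of_mem hz))
    have := this.op1 one_pos
    simp only [Multiset.sum_cons, Multiset.card_cons] at this he hs
    have e1 : y + a.sum = d - 1 := by omega
    have e2 : a.card + 1 - 1 + 1 = m := by omega
    rwa [e1, e2] at this

theorem cyc_isCycle {α : Type} [DecidableEq α] [Fintype α] {f : Perm α} {s : Finset α}
    (h : Cyc f s) (hs : 2 ≤ s.card) (hfix : ∀ x ∉ s, f x = x) : f.IsCycle ∧ f.support = s := by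
  have hne : ∀ x ∈ s, f x ≠ x := fun x hx e => by
    obtain ⟨y, hy, hne⟩ := Finset.exists_mem_ne (s := s) (by omega) x
    refine hne (h.2 (fun z => z = x) ?_ x hx y hy rfl)
    rintro z - rfl
    exact e
  constructor
  · obtain ⟨x, hx⟩ : s.Nonempty := by rw [← Finset.card_pos]; omega
    refine ⟨x, hne x hx, fun y hy => ?_⟩
    have hys : y ∈ s := by
      by_contra hc; exact hy (hfix y hc)
    refine h.2 (fun z => SameCycle f x z) (fun z _ hz => ?_) x hx y hys (SameCycle.refl _ _)
    exact sameCycle_apply_right.2 hz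
  · ext x
    rw [mem_support]
    refine ⟨fun hx => ?_, hne x⟩
    by_contra hc; exact hx (hfix x hc)

theorem CT.cycleType_eq {α : Type} [DecidableEq α] [Fintype α] {f : Perm α} {U : Finset α}
    {a : Multiset ℕ} (h : CT f U a) : ∀ r : Perm α, (∀ x ∈ U, r x = f x) → (∀ x ∉ U, r x = x) →
    r.cycleType + Multiset.replicate (U.card - r.support.card) 1 = a := by
  induction h with
  | nil =>
    intro r _ h2
    have : r = 1 := by ext x; exact h2 x (by simp)
    subst this
    simp
  | cons s U a n hs hne hd hn h ih =>
    intro r h1 h2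
    have hrs : Cyc r s := hs.congr fun x hx => h1 x (Finset.mem_union_left _ hx)
    set c : Perm α := Perm.ofSubtype (r.subtypePerm (p := fun x => x ∈ s) fun x => maps_iff hrs.1)
      with hc
    have c1 : ∀ x ∈ s, c x = r x := fun x hx => by
      rw [hc, ofSubtype_apply_of_mem _ hx]; rfl
    have c2 : ∀ x ∉ s, c x = x := fun x hx => by
      rw [hc, ofSubtype_apply_of_not_mem _ hx]
    have hcs : Cyc c s := hrs.congr c1
    have ci : ∀ x ∉ s, c⁻¹ x = x := fun x hx => by rw [Perm.inv_eq_iff_eq, c2 x hx]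
    have r1 : ∀ x ∈ s, (c⁻¹ * r) x = x := fun x hx => by
      rw [Perm.mul_apply, Perm.inv_eq_iff_eq, c1 x hx]
    have r2 : ∀ x ∉ s, (c⁻¹ * r) x = r x := fun x hx => by
      rw [Perm.mul_apply, ci]
      rwa [maps_iff hrs.1]
    have hdis : Perm.Disjoint c (c⁻¹ * r) := fun x => by
      by_cases hx : x ∈ s
      · exact Or.inr (r1 x hx)
      · exact Or.inl (c2 x hx)
    have hr : r = c * (c⁻¹ * r) := by group
    have hdU := Finset.disjoint_left.1 hd
    have key := ih (c⁻¹ * r) (fun x hx => by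
        rw [r2 x fun h => hdU h hx, h1 x (Finset.mem_union_right _ hx)])
      (fun x hx => by
        by_cases hxs : x ∈ s
        · exact r1 x hxs
        · rw [r2 x hxs, h2 x]; simp [hxs, hx])
    have hsup : (c⁻¹ * r).support.card ≤ U.card := by
      refine Finset.card_le_card fun x hx => ?_
      by_contra hxU
      rw [mem_support] at hx
      apply hx
      by_cases hxs : x ∈ s
      · exact r1 x hxs
      · rw [r2 x hxs, h2 x]; simp [hxs, hxU]
    have e1 : r.cycleType = c.cycleType + (c⁻¹ * r).cycleType := by
      conv_lhs => rw [hr]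
      exact hdis.cycleType_mul
    have e2 : r.support.card = c.support.card + (c⁻¹ * r).support.card := by
      conv_lhs => rw [hr]
      exact hdis.card_support_mul
    rw [e1, e2, Finset.card_union_of_disjoint hd, ← key]
    by_cases hs2 : 2 ≤ s.card
    · obtain ⟨i1, i2⟩ := cyc_isCycle hcs hs2 c2
      rw [i1.cycleType, i2, hn, ← Multiset.singleton_add, add_assoc, Nat.add_sub_add_left]
    · have hs1 : s.card = 1 := by have := hne.card_pos; omega
      have hc1 : c = 1 := by
        obtain ⟨z, rfl⟩ := Finset.card_eq_one.1 hs1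
        ext x
        by_cases hx : x ∈ ({z} : Finset α)
        · have h3 := hcs.1 x hx
          rw [Finset.mem_singleton] at h3 hx
          rw [h3, hx]; rfl
        · exact c2 x hx
      rw [← hn, hs1]
      generalize c⁻¹ * r = k at *
      rw [hc1]
      simp only [cycleType_one, support_one, Finset.card_empty, zero_add]
      have : 1 + U.card - k.support.card = (U.card - k.support.card) + 1 := by omega
      rw [this, Multiset.replicate_succ, Multiset.add_cons]

theorem CT.full {d : ℕ} {f : Perm (Fin d)} {a : Multiset ℕ} (h : CT f Finset.univ a) :
    fullCycleType f = a := by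
  have := h.cycleType_eq f (fun _ _ => rfl) (by simp)
  simpa [fullCycleType] using this

def pull {d : ℕ} (ι : Fin d → ℕ) (s : Finset ℕ) : Finset (Fin d) :=
  Finset.univ.filter fun i => ι i ∈ s

theorem mem_pull {d : ℕ} {ι : Fin d → ℕ} {s : Finset ℕ} {i : Fin d} : i ∈ pull ι s ↔ ι i ∈ s := by
  simp [pull]

theorem card_pull {d : ℕ} {ι : Fin d → ℕ} (hι : Function.Injective ι) {s : Finset ℕ}
    (hs : ∀ x ∈ s, ∃ i, ι i = x) : (pull ι s).card = s.card := by
  rw [← Finset.card_image_of_injective _ hι]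
  congr 1
  ext x
  rw [Finset.mem_image]
  constructor
  · rintro ⟨i, hi, rfl⟩; exact mem_pull.1 hi
  · intro hx
    obtain ⟨i, rfl⟩ := hs x hx
    exact ⟨i, mem_pull.2 hx, rfl⟩

theorem Cyc.pull {d : ℕ} {ι : Fin d → ℕ} (hι : Function.Injective ι) {s : Finset ℕ}
    {t : Perm ℕ} {t' : Perm (Fin d)} (ht : ∀ i, ι (t' i) = t (ι i))
    (h : Cyc t s) : Cyc t' (pull ι s) := by
  refine ⟨fun i hi => ?_, fun P hP x hx y hy hp => ?_⟩
  · rw [mem_pull] at hi ⊢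
    rw [ht]; exact h.1 _ hi
  · obtain ⟨z, hz, hz'⟩ := h.2 (fun z => ∃ i, ι i = z ∧ P i) (fun z hz => by
      rintro ⟨i, rfl, hi⟩
      exact ⟨t' i, ht i, hP i (mem_pull.2 hz) hi⟩) (ι x) (mem_pull.1 hx) (ι y) (mem_pull.1 hy)
      ⟨x, rfl, hp⟩
    rwa [← hι hz]

theorem CT.pull {d : ℕ} {ι : Fin d → ℕ} (hι : Function.Injective ι) {U : Finset ℕ}
    {a : Multiset ℕ} {t : Perm ℕ} {t' : Perm (Fin d)} (ht : ∀ i, ι (t' i) = t (ι i))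
    (h : CT t U a) (hs : ∀ x ∈ U, ∃ i, ι i = x) : CT t' (pull ι U) a := by
  induction h with
  | nil =>
    have : _root_.pull ι ∅ = ∅ := by ext i; simp [mem_pull]
    rw [this]; exact CT.nil
  | cons s U a n hs' hne hd hn h ih =>
    have hs1 : ∀ x ∈ s, ∃ i, ι i = x := fun x hx => hs x (Finset.mem_union_left _ hx)
    refine CT.cons' (hs'.pull hι ht) ?_ ?_ ((card_pull hι hs1).trans hn)
      (ih fun x hx => hs x (Finset.mem_union_right _ hx)) ?_
    · rw [← Finset.card_pos, card_pull hι hs1]; exact hne.card_pos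
    · rw [Finset.disjoint_left] at hd ⊢
      intro i hi hi'
      exact hd (mem_pull.1 hi) (mem_pull.1 hi')
    · ext i; simp [mem_pull]

theorem Good.real {a b : Multiset ℕ} {m d : ℕ} (h : Good a b m) (hd : a.sum = d) (hm : 1 ≤ m) :
    ∃ t₁ t₂ : Perm (Fin d), fullCycleType t₁ = a ∧ fullCycleType t₂ = b ∧ (t₁ * t₂).IsCycle ∧
      (t₁ * t₂).support.card = m + 1 ∧
      ∀ x y, ∃ π ∈ Subgroup.closure ({t₁, t₂} : Set (Perm (Fin d))), π x = y := by
  obtain ⟨t₁, t₂, U, S, h⟩ := h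
  have hU : U.card = d := by rw [h.ct₁.card, hd]
  let e : U ≃ Fin d := Finset.equivFinOfCardEq hU
  let ι : Fin d → ℕ := fun i => (e.symm i : ℕ)
  have hι : Function.Injective ι := fun i j hij => e.symm.injective (Subtype.ext hij)
  have hιU : ∀ i, ι i ∈ U := fun i => (e.symm i).2
  have hsurj : ∀ x ∈ U, ∃ i, ι i = x := fun x hx => ⟨e ⟨x, hx⟩, by simp [ι]⟩
  have lift : ∀ t : Perm ℕ, (∀ x ∈ U, t x ∈ U) →
      ∃ t' : Perm (Fin d), ∀ i, ι (t' i) = t (ι i) := by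
    intro t ht
    refine ⟨e.permCongr (t.subtypePerm (p := fun x => x ∈ U) fun x => maps_iff ht), fun i => ?_⟩
    simp [ι, Equiv.permCongr_apply]
  obtain ⟨s₁, hs₁⟩ := lift t₁ h.ct₁.maps
  obtain ⟨s₂, hs₂⟩ := lift t₂ h.ct₂.maps
  have hs₁₂ : ∀ i, ι ((s₁ * s₂) i) = (t₁ * t₂) (ι i) := fun i => by
    rw [Perm.mul_apply, Perm.mul_apply, hs₁, hs₂]
  have hpU : pull ι U = Finset.univ := by ext i; simp [mem_pull, hιU]
  have hsurjS : ∀ x ∈ S, ∃ i, ι i = x := fun x hx => hsurj x (h.sub hx)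
  have hcS := card_pull hι hsurjS
  rw [h.card] at hcS
  obtain ⟨i1, i2⟩ := cyc_isCycle (h.cyc.pull hι hs₁₂) (by omega) (fun i hi => by
    apply hι
    rw [hs₁₂, h.fixc]
    rwa [mem_pull] at hi)
  refine ⟨s₁, s₂, (hpU ▸ h.ct₁.pull hι hs₁ hsurj).full, (hpU ▸ h.ct₂.pull hι hs₂ hsurj).full,
    i1, by rw [i2, hcS], fun x y => ?_⟩
  set K := Subgroup.closure ({s₁, s₂} : Set (Perm (Fin d)))
  have k1 : s₁ ∈ K := Subgroup.subset_closure (by simp)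
  have k2 : s₂ ∈ K := Subgroup.subset_closure (by simp)
  have step : ∀ (s : Perm (Fin d)) (t : Perm ℕ), s ∈ K → (∀ i, ι (s i) = t (ι i)) → ∀ z ∈ U,
      ((∃ π ∈ K, ι (π x) = t z) ↔ ∃ π ∈ K, ι (π x) = z) := by
    intro s t hs hst z hz
    constructor
    · rintro ⟨π, hπ, hz'⟩
      refine ⟨s⁻¹ * π, K.mul_mem (K.inv_mem hs) hπ, t.injective ?_⟩
      rw [← hst, ← hz']
      simp
    · rintro ⟨π, hπ, hz'⟩
      refine ⟨s * π, K.mul_mem hs hπ, ?_⟩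
      rw [Perm.mul_apply, hst, hz']
  obtain ⟨π, hπ, he⟩ := h.conn (fun z => ∃ π ∈ K, ι (π x) = z) (step s₁ t₁ k1 hs₁)
    (step s₂ t₂ k2 hs₂) (ι x) (hιU x) (ι y) (hιU y) ⟨1, K.one_mem, rfl⟩
  exact ⟨π, hπ, hι he⟩

end Transport

section Main

theorem full_filter {d : ℕ} (f : Perm (Fin d)) :
    (fullCycleType f).filter (fun x => 2 ≤ x) = f.cycleType := by
  rw [fullCycleType, Multiset.filter_add, Multiset.filter_eq_self.2, Multiset.filter_eq_nil.2,
    add_zero]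
  · intro x hx
    rw [Multiset.eq_of_mem_replicate hx]; omega
  · intro x hx; exact two_le_of_mem_cycleType hx

theorem full_conj_of_eq {d : ℕ} {f g : Perm (Fin d)} (h : fullCycleType f = fullCycleType g) :
    ∃ k, k * f * k⁻¹ = g := by
  have : IsConj f g := by
    rw [isConj_iff_cycleType_eq, ← full_filter f, h, full_filter]
  exact isConj_iff.1 this

theorem full_conj {d : ℕ} (f k : Perm (Fin d)) :
    fullCycleType (k * f * k⁻¹) = fullCycleType f := by
  rw [fullCycleType, fullCycleType, cycleType_conj, card_support_conj]

theorem full_inv {d : ℕ} (f : Perm (Fin d)) : fullCycleType f⁻¹ = fullCycleType f := by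
  rw [fullCycleType, fullCycleType, cycleType_inv, support_inv]

def Sol (d : ℕ) (a b : Multiset ℕ) (m₁ m₂ : ℕ) : Prop :=
  ∃ (τ₁ τ₂ σ₁ σ₂ : Perm (Fin d)),
      τ₁ * τ₂ * σ₁ * σ₂ = 1 ∧ fullCycleType τ₁ = a ∧ fullCycleType τ₂ = b ∧
      σ₁.IsCycle ∧ σ₁.support.card = m₁ + 1 ∧ σ₂.IsCycle ∧ σ₂.support.card = m₂ + 1 ∧
      (∀ x y : Fin d,
        ∃ π ∈ Subgroup.closure ({τ₁, τ₂, σ₁, σ₂} : Set (Perm (Fin d))), π x = y)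

theorem trans_mono {d : ℕ} {A B : Set (Perm (Fin d))}
    (h : ∀ x y : Fin d, ∃ π ∈ Subgroup.closure A, π x = y) (hAB : A ⊆ Subgroup.closure B) :
    ∀ x y : Fin d, ∃ π ∈ Subgroup.closure B, π x = y := by
  intro x y
  obtain ⟨π, hπ, e⟩ := h x y
  exact ⟨π, (Subgroup.closure_le _).2 hAB hπ, e⟩

theorem Sol.symm {d a b m₁ m₂} (h : Sol d a b m₁ m₂) : Sol d b a m₂ m₁ := by
  obtain ⟨τ₁, τ₂, σ₁, σ₂, h1, h2, h3, h4, h5, h6, h7, h8⟩ := h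
  refine ⟨τ₂⁻¹, τ₁⁻¹, σ₂⁻¹, σ₁⁻¹, ?_, by rw [full_inv, h3], by rw [full_inv, h2], h6.inv,
    by rw [support_inv, h7], h4.inv, by rw [support_inv, h5], trans_mono h8 ?_⟩
  · have : (τ₁ * τ₂)⁻¹ = σ₁ * σ₂ := by
      rw [inv_eq_iff_mul_eq_one, ← mul_assoc, h1]
    calc τ₂⁻¹ * τ₁⁻¹ * σ₂⁻¹ * σ₁⁻¹ = (τ₁ * τ₂)⁻¹ * (σ₁ * σ₂)⁻¹ := by group
      _ = 1 := by rw [this, mul_inv_cancel]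
  · rintro x (rfl | rfl | rfl | rfl) <;>
    · refine (Subgroup.inv_mem_iff _).1 (Subgroup.subset_closure ?_)
      simp

theorem CT.pos {α : Type} [DecidableEq α] {f : Perm α} {U : Finset α} {a : Multiset ℕ}
    (h : CT f U a) : ∀ x ∈ a, 0 < x := by
  induction h with
  | nil => simp
  | cons s U a n hs hne hd hn h ih =>
    intro x hx
    rcases Multiset.mem_cons.1 hx with rfl | hx
    · rw [← hn]; exact hne.card_pos
    · exact ih x hx

theorem merge_many {α : Type} [DecidableEq α] {f : Perm α} {U : Finset α} {a : Multiset ℕ}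
    (h : CT f U a) (j : ℕ) (hj : j + 1 ≤ a.card) :
    ∃ (σ : Perm α) (S B V : Finset α) (r : Multiset ℕ), Cyc σ S ∧ S.card = j + 1 ∧
      (∀ x ∉ S, σ x = x) ∧ S ⊆ B ∧ Cyc (σ * f) B ∧ Disjoint B V ∧ U = B ∪ V ∧ CT f V r ∧
      r.card + j + 1 = a.card := by
  induction j with
  | zero =>
    obtain ⟨x, hx⟩ := Multiset.card_pos_iff_exists_mem.1 (by omega : 0 < a.card)
    obtain ⟨a, rfl⟩ := Multiset.exists_cons_of_mem hx
    obtain ⟨s, V, hU, hd, hs, ⟨z, hz⟩, hc, hV⟩ := h.extract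
    exact ⟨1, {z}, s, V, a, Cyc.single rfl, by simp, by simp, by simpa using hz, by simpa using hs,
      hd, hU, hV, by simp⟩
  | succ j ih =>
    obtain ⟨σ, S, B, V, r, h1, h2, h3, h4, h5, h6, h7, h8, h9⟩ := ih (by omega)
    obtain ⟨x, hx⟩ := Multiset.card_pos_iff_exists_mem.1 (by omega : 0 < r.card)
    obtain ⟨r, rfl⟩ := Multiset.exists_cons_of_mem hx
    obtain ⟨s, V, rfl, hd, hs, ⟨v, hv⟩, hc, hV⟩ := h8.extract
    obtain ⟨u, hu⟩ : S.Nonempty := by rw [← Finset.card_pos]; omega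
    rw [Finset.disjoint_union_right] at h6
    have hBs := Finset.disjoint_left.1 h6.1
    have hvS : v ∉ S := fun hh => hBs (h4 hh) hv
    refine ⟨swap u v * σ, insert v S, B ∪ s, V, r, h1.insert hu hvS (h3 v hvS), ?_, ?_, ?_, ?_,
      ?_, ?_, hV, ?_⟩
    · rw [Finset.card_insert_of_notMem hvS, h2]
    · intro y hy
      rw [Finset.mem_insert, not_or] at hy
      rw [Perm.mul_apply, h3 y hy.2, swap_apply_of_ne_of_ne _ hy.1]
      rintro rfl; exact hy.2 hu
    · intro y hy
      rcases Finset.mem_insert.1 hy with rfl | hy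
      · exact Finset.mem_union_right _ hv
      · exact Finset.mem_union_left _ (h4 hy)
    · rw [mul_assoc]
      refine h5.merge (hs.congr fun y hy => ?_) h6.1 (h4 hu) hv
      rw [Perm.mul_apply, h3]
      exact fun hh => hBs (h4 hh) (hs.1 y hy)
    · rw [Finset.disjoint_union_left]; exact ⟨h6.2, hd⟩
    · rw [h7, Finset.union_assoc]
    · rw [Multiset.card_cons] at h9; omega

theorem sol_B {d g m₁ m₂ : ℕ} {a b : Multiset ℕ} (hg : 1 ≤ g) (ha : ∀ x ∈ a, 0 < x)
    (hb : ∀ x ∈ b, 0 < x) (sa : a.sum = d) (sb : b.sum = d) (h1 : 1 ≤ m₁) (h2 : 1 ≤ m₂)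
    (he : m₁ + m₂ + 2 = a.card + b.card + 2 * g) (hd : m₂ + 1 ≤ d) (hm : m₁ < a.card) :
    Sol d a b m₁ m₂ := by
  obtain ⟨f, hf, -⟩ := CT.exists_of_sum (Finset.univ : Finset (Fin d)) a ha (by simp [sa])
  obtain ⟨σ, S, B, V, r, c1, c2, c3, c4, c5, c6, c7, c8, c9⟩ := merge_many hf m₁ hm
  have hne : B.Nonempty := by
    obtain ⟨u, hu⟩ : S.Nonempty := by rw [← Finset.card_pos]; omega
    exact ⟨u, c4 hu⟩
  have ct : CT (σ * f) Finset.univ (B.card ::ₘ r) := by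
    refine CT.cons' c5 hne c6 rfl (c8.congr fun x hx => ?_) c7
    rw [Perm.mul_apply, c3]
    intro hh
    exact Finset.disjoint_left.1 c6 (c4 hh) (c8.maps x hx)
  have hr := ct.card
  rw [Finset.card_univ, Fintype.card_fin] at hr
  have good : Good (B.card ::ₘ r) b m₂ := thmA d _ _ m₂ g
    ⟨ct.pos, hb, hr.symm, sb, by rw [Multiset.card_cons]; omega, hd, Or.inl hg⟩
  obtain ⟨s₁, s₂, e1, e2, e3, e4, e5⟩ := good.real hr.symm h2
  obtain ⟨k, hk⟩ := full_conj_of_eq (ct.full.trans e1.symm)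
  obtain ⟨i1, i2⟩ := cyc_isCycle c1 (by omega) c3
  have hs1 : s₁ = (k * σ * k⁻¹) * (k * f * k⁻¹) := by rw [← hk]; group
  set σ' := k * σ * k⁻¹ with hσ'
  set f' := k * f * k⁻¹ with hf'
  have j1 : σ'.IsCycle := i1.conj
  have j2 : σ'.support.card = m₁ + 1 := by rw [hσ', card_support_conj, i2, c2]
  have j3 : fullCycleType f' = a := by rw [hf', full_conj, hf.full]
  refine ⟨f', s₂, σ', σ'⁻¹ * (s₁ * s₂)⁻¹ * σ'⁻¹⁻¹, ?_, j3, e2, j1, j2, e3.inv.conj,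
    by rw [card_support_conj, support_inv, e4], trans_mono e5 ?_⟩
  · rw [hs1]; group
  · rintro x (rfl | rfl)
    · rw [hs1]
      exact Subgroup.mul_mem _ (Subgroup.subset_closure (by simp))
        (Subgroup.subset_closure (by simp))
    · exact Subgroup.subset_closure (by simp)

theorem sol_A {d m₁ m₂ : ℕ} {a b r : Multiset ℕ} (sa : a.sum = d) (sb : b.sum = d)
    (h1 : 1 ≤ m₁) (h2 : 1 ≤ m₂) (ga : Good a r m₁) (gb : Good b r m₂) : Sol d a b m₁ m₂ := by
  obtain ⟨t₁, t₂, a1, a2, a3, a4, a5⟩ := ga.real sa h1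
  obtain ⟨s₁, s₂, b1, b2, b3, b4, -⟩ := gb.real sb h2
  obtain ⟨k, hk⟩ := full_conj_of_eq (b2.trans (a2.symm.trans (full_inv t₂).symm))
  set c := k * (s₁ * s₂) * k⁻¹ with hc
  have hs : k * s₁ * k⁻¹ = c * t₂ := by
    rw [← inv_inv t₂, ← hk, hc]; group
  have j1 : c.IsCycle := b3.conj
  have j2 : c.support.card = m₂ + 1 := by rw [hc, card_support_conj, b4]
  refine ⟨t₁, t₂ * c, (t₁ * t₂)⁻¹, (t₁ * t₂) * c⁻¹ * (t₁ * t₂)⁻¹, by group, a1, ?_, a3.inv,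
    by rw [support_inv, a4], j1.inv.conj, by rw [card_support_conj, support_inv, j2],
    trans_mono a5 ?_⟩
  · have : t₂ * c = c⁻¹ * (k * s₁ * k⁻¹) * c⁻¹⁻¹ := by rw [hs]; group
    rw [this, full_conj, full_conj, b1]
  · have m1 : t₁ ∈ Subgroup.closure ({t₁, t₂ * c, (t₁ * t₂)⁻¹,
        (t₁ * t₂) * c⁻¹ * (t₁ * t₂)⁻¹} : Set (Perm (Fin d))) :=
      Subgroup.subset_closure (by simp)
    have m2 : (t₁ * t₂)⁻¹ ∈ Subgroup.closure ({t₁, t₂ * c, (t₁ * t₂)⁻¹,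
        (t₁ * t₂) * c⁻¹ * (t₁ * t₂)⁻¹} : Set (Perm (Fin d))) :=
      Subgroup.subset_closure (by simp)
    rintro x (rfl | rfl)
    · exact m1
    · have := Subgroup.mul_mem _ (Subgroup.inv_mem _ m1) (Subgroup.inv_mem _ m2)
      rwa [inv_inv, inv_mul_cancel_left] at this

theorem sol_main {d g m₁ m₂ : ℕ} {a b : Multiset ℕ} (hg : 1 ≤ g) (ha : ∀ x ∈ a, 0 < x)
    (hb : ∀ x ∈ b, 0 < x) (sa : a.sum = d) (sb : b.sum = d) (h1 : 1 ≤ m₁) (h2 : 1 ≤ m₂)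
    (he : m₁ + m₂ + 2 = a.card + b.card + 2 * g) (hd₁ : m₁ + 1 ≤ d) (hd₂ : m₂ + 1 ≤ d) :
    Sol d a b m₁ m₂ := by
  by_cases hm₁ : m₁ < a.card
  · exact sol_B hg ha hb sa sb h1 h2 he hd₂ hm₁
  by_cases hm₂ : m₂ < b.card
  · exact (sol_B hg hb ha sb sa h2 h1 (by omega) hd₁ hm₂).symm
  rcases Nat.even_or_odd' (m₁ - a.card) with ⟨h, hh | hh⟩
  · exact sol_A sa sb h1 h2 (good_R2 (h := h) ha sa (by omega) (by omega) hd₁)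
      (good_R2 (h := g - 1 - h) hb sb (by omega) (by omega) hd₂)
  · exact sol_A sa sb h1 h2 (good_R1 (h := h + 1) ha sa (by omega) (by omega) hd₁)
      (good_R1 (h := g - (h + 1)) hb sb (by omega) (by omega) hd₂)

end Main


/-- Lemma 2.5 (case `ℓ = 2` of Proposition 1.4): for positive integers
`d, g`, partitions `(a₁,…,a_p)`, `(b₁,…,b_q)` of `d` and positive integers
`m₁, m₂` with `m₁ + m₂ = p + q - 2 + 2g`, `m₁ + 1 ≤ d` and `m₂ + 1 ≤ d`,
there exist permutations `τ₁, τ₂, σ₁, σ₂ ∈ S_d` with `τ₁ τ₂ σ₁ σ₂ = id`,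
prescribed cycle types, `σᵢ` an `(mᵢ+1)`-cycle, generating a transitive
subgroup. -/
theorem lem_2_5 (d g p q m₁ m₂ : ℕ) (hd : 0 < d) (hg : 0 < g)
    (hp : 0 < p) (hq : 0 < q) (hm₁ : 0 < m₁) (hm₂ : 0 < m₂)
    (a : Fin p → ℕ) (b : Fin q → ℕ)
    (ha : ∀ i, 0 < a i) (hb : ∀ i, 0 < b i)
    (hsa : ∑ i, a i = d) (hsb : ∑ i, b i = d)
    (hsm : m₁ + m₂ = p + q - 2 + 2 * g)
    (hm₁d : m₁ + 1 ≤ d) (hm₂d : m₂ + 1 ≤ d) :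
    ∃ (τ₁ τ₂ σ₁ σ₂ : Equiv.Perm (Fin d)),
      τ₁ * τ₂ * σ₁ * σ₂ = 1 ∧
      fullCycleType τ₁ = Finset.univ.val.map a ∧
      fullCycleType τ₂ = Finset.univ.val.map b ∧
      σ₁.IsCycle ∧ σ₁.support.card = m₁ + 1 ∧
      σ₂.IsCycle ∧ σ₂.support.card = m₂ + 1 ∧
      (∀ x y : Fin d,
        ∃ π ∈ Subgroup.closure ({τ₁, τ₂, σ₁, σ₂} : Set (Equiv.Perm (Fin d))),
          π x = y) := by
  exact sol_main (a := Finset.univ.val.map a) (b := Finset.univ.val.map b) (g := g) hg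
    (by simpa using ha) (by simpa using hb) hsa hsb hm₁ hm₂ (by simp; omega) hm₁d hm₂d
end
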